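/- arXiv:1207.1961 — 3 statements merged into one kernel-verified Lean document; each statement's English description precedes it below -/
import Mathlib

section
/- Let G be a connected graph whose edge set is partitioned into a cycle C of length at least 4 and a connected graph G' such that G' has an oriented perfect path double cover and at least 2 vertices of C do not belong to G'. Then G has an oriented perfect path double cover. -/
/-- An oriented perfect path double cover: for each vertex `v`, a directed path
`P v` (a nonempty list of distinct vertices, consecutive ones adjacent) starting
at `v`, such that each vertex is the end of exactly one path, and each arc of the
symmetric orientation lies in exactly one path. -/
def HasOPPDC {V : Type*} (G : SimpleGraph V) : Prop :=
  ∃ P : V → List V,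
    (∀ v, P v ≠ [] ∧ (P v).Nodup ∧ (P v).Chain' G.Adj ∧ (P v).head? = some v) ∧
    (∀ w : V, ∃! v, (P v).getLast? = some w) ∧
    (∀ a b : V, G.Adj a b → ∃! v, (a, b) ∈ (P v).zip (P v).tail)

/-- The cycle graph on `ZMod n`: `v` adjacent to `v + 1`. -/
def cycleGraph (n : ℕ) : SimpleGraph (ZMod n) :=
  SimpleGraph.fromRel (fun a b => b = a + 1)

/-!
To add a directed cycle to a perfect path cover, remove one of its arcs `(x, i)`: what is left of
the cycle becomes the path starting at `i` and ending at `x`, while the old path ending at `x`, the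
arc `(x, i)` and the old path starting at `i` are joined to a single one. The starts and the ends
remain in order; the only question is whether the joined path repeats a vertex. It does not if one
of `x` and `i` has its one-vertex path and the other path involved avoids it.

Both orientations of `C` are added in this way, using two vertices `x` and `y` of `C` outside `G'`.
Each of them has its one-vertex path and lies on no other path. By symmetry, `y` is not the vertex
`u` preceding `x` on `C`. First the backward cycle is added, removing its arc `(x, u)`. From then on
the path starting at `u` and ending at `x` is the only long one that meets `y`. Then the forward
cycle is added, removing the arc `(y, z)` that leaves `y` if `y` follows `x` on `C`, and the arc
`(a, y)` that enters `y` otherwise. The path joined to `y` is the one starting at `z ≠ u` (here the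
length of `C` is at least 4), respectively the one ending at `a ≠ x`, so it avoids `y`.
-/

section Arcs

variable {V W : Type*}

/-- The set of arcs traversed by the directed path that visits the vertices of `l` in order. -/
def arcs (l : List V) : Set (V × V) := {p | p ∈ l.consecutivePairs}

@[simp] lemma arcs_singleton (a : V) : arcs [a] = ∅ := by simp [arcs]

@[simp] lemma arcs_cons_cons (a b : V) (l : List V) :
    arcs (a :: b :: l) = insert (a, b) (arcs (b :: l)) := by
  ext p
  simp [arcs, List.consecutivePairs]

lemma mem_arcs_iff_getElem {l : List V} {p : V × V} :
    p ∈ arcs l ↔ ∃ (i : ℕ) (h : i + 1 < l.length), p = (l[i], l[i + 1]) := by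
  simp only [arcs, Set.mem_ofPred_eq, List.mem_iff_getElem, List.getElem_zip, List.getElem_tail,
    List.length_zip, List.length_tail, lt_min_iff]
  exact exists_congr fun i => ⟨fun ⟨h, e⟩ => ⟨by omega, e.symm⟩, fun ⟨h, e⟩ => ⟨by omega, e.symm⟩⟩

lemma arcs_append_cons (l₁ l₂ : List V) (x : V) :
    arcs (l₁ ++ x :: l₂) = arcs (l₁ ++ [x]) ∪ arcs (x :: l₂) := by
  induction l₁ with
  | nil => simp
  | cons a l ih => cases l <;> simp_all [Set.insert_union]

lemma arcs_reverse (l : List V) : arcs l.reverse = Prod.swap ⁻¹' arcs l := by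
  ext p
  simp only [Set.mem_preimage, mem_arcs_iff_getElem, List.getElem_reverse, List.length_reverse,
    Prod.ext_iff, Prod.fst_swap, Prod.snd_swap]
  constructor <;> rintro ⟨i, hi, h₁, h₂⟩ <;>
    exact ⟨l.length - 2 - i, by omega, by grind, by grind⟩

lemma arcs_map (f : W → V) (l : List W) : arcs (l.map f) = Prod.map f f '' arcs l := by
  ext p
  simp only [Set.mem_image, mem_arcs_iff_getElem, List.getElem_map, List.length_map]
  grind

lemma isChain_iff_forall_mem_arcs {R : V → V → Prop} {l : List V} :
    l.IsChain R ↔ ∀ p ∈ arcs l, R p.1 p.2 := by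
  simp only [List.isChain_iff_getElem, mem_arcs_iff_getElem]
  exact ⟨fun h p ⟨i, hi, e⟩ => e ▸ h i hi, fun h i hi => h _ ⟨i, hi, rfl⟩⟩

lemma fst_mem_dropLast_of_mem_arcs {l : List V} {p : V × V} (h : p ∈ arcs l) :
    p.1 ∈ l.dropLast := by
  obtain ⟨i, hi, rfl⟩ := mem_arcs_iff_getElem.1 h
  exact List.mem_iff_getElem.2 ⟨i, by simp; omega, by simp⟩

lemma snd_mem_tail_of_mem_arcs {l : List V} {p : V × V} (h : p ∈ arcs l) : p.2 ∈ l.tail :=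
  (List.of_mem_zip h).2

lemma notMem_arcs_of_head? {a : V} {l : List V} (hl : l.Nodup) (ha : l.head? = some a) (b : V) :
    (b, a) ∉ arcs l := by
  obtain ⟨t, rfl⟩ := List.head?_eq_some_iff.1 ha
  exact fun h => (List.nodup_cons.1 hl).1 (snd_mem_tail_of_mem_arcs h)

/-- No arc of `A` starts or ends at `v`. -/
def IsIsolatedIn (A : Set (V × V)) (v : V) : Prop := ∀ p ∈ A, p.1 ≠ v ∧ p.2 ≠ v

lemma IsIsolatedIn.mono {A B : Set (V × V)} {v : V} (h : IsIsolatedIn B v) (hAB : A ⊆ B) :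
    IsIsolatedIn A v := fun p hp => h p (hAB hp)

lemma IsIsolatedIn.eq_singleton {v : V} {l : List V} (h : IsIsolatedIn (arcs l) v) (hv : v ∈ l) :
    l = [v] := by
  obtain ⟨i, hi, rfl⟩ := List.mem_iff_getElem.1 hv
  have hsucc : ¬ i + 1 < l.length := fun hlt =>
    (h _ (mem_arcs_iff_getElem.2 ⟨i, hlt, rfl⟩)).1 rfl
  have hzero : i = 0 := by
    by_contra hne
    obtain ⟨j, rfl⟩ := Nat.exists_eq_succ_of_ne_zero hne
    exact (h _ (mem_arcs_iff_getElem.2 ⟨j, hi, rfl⟩)).2 rfl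
  subst hzero
  exact List.ext_getElem (by simp; omega) (by simp +contextual)

/-- The set of arcs of the directed cycle that visits the vertices of `l` in order and then
returns to the first of them. -/
def cycleArcs (l : List V) : Set (V × V) := arcs (l ++ l.head?.toList)

lemma cycleArcs_cons (a : V) (l : List V) : cycleArcs (a :: l) = arcs (a :: l ++ [a]) := rfl

lemma cycleArcs_append_comm (l₁ l₂ : List V) : cycleArcs (l₁ ++ l₂) = cycleArcs (l₂ ++ l₁) := by
  rcases l₁ with - | ⟨a, l₁⟩ <;> rcases l₂ with - | ⟨b, l₂⟩
  iterate 3 simp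
  have key (a b : V) (l₁ l₂ : List V) : cycleArcs (a :: l₁ ++ b :: l₂) =
      arcs (a :: l₁ ++ [b]) ∪ arcs (b :: l₂ ++ [a]) := by
    simpa [cycleArcs_cons] using arcs_append_cons (a :: l₁) (l₂ ++ [a]) b
  rw [key, key, Set.union_comm]

lemma cycleArcs_eq_of_isRotated {l l' : List V} (h : l ~r l') : cycleArcs l = cycleArcs l' := by
  obtain ⟨n, hn, rfl⟩ := List.isRotated_iff_mod.1 h
  rw [List.rotate_eq_drop_append_take hn, cycleArcs_append_comm, List.take_append_drop]

lemma cycleArcs_eq_arcs_union {a b : V} {l : List V} (ha : l.head? = some a)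
    (hb : l.getLast? = some b) : cycleArcs l = arcs l ∪ {(b, a)} := by
  obtain ⟨s, rfl⟩ := List.getLast?_eq_some_iff.1 hb
  rw [cycleArcs, ha, Option.toList_some, List.append_assoc, List.singleton_append,
    arcs_append_cons]
  simp

lemma cycleArcs_reverse (l : List V) : cycleArcs l.reverse = Prod.swap ⁻¹' cycleArcs l := by
  rcases l with - | ⟨a, l⟩
  · simp [cycleArcs, arcs]
  · rw [cycleArcs_cons, ← arcs_reverse, List.reverse_cons, cycleArcs_append_comm,
      List.singleton_append, cycleArcs_cons]
    simp

lemma fst_mem_of_mem_cycleArcs {l : List V} {p : V × V} (h : p ∈ cycleArcs l) : p.1 ∈ l := by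
  rcases l with - | ⟨a, l⟩
  · simp [cycleArcs, arcs] at h
  · rw [cycleArcs_cons] at h
    simpa only [List.dropLast_concat] using fst_mem_dropLast_of_mem_arcs h

lemma cycleArcs_map (f : W → V) (l : List W) :
    cycleArcs (l.map f) = Prod.map f f '' cycleArcs l := by
  rw [cycleArcs, cycleArcs, ← arcs_map]
  cases l <;> simp

lemma exists_isRotated_cons_of_mem {a : V} {l : List V} (h : a ∈ l) : ∃ l', l ~r a :: l' := by
  obtain ⟨s, t, rfl⟩ := List.append_of_mem h
  exact ⟨t ++ s, List.isRotated_append⟩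

lemma disjoint_cycleArcs_cycleArcs_reverse {l : List V} (hl : l.Nodup) (hlen : 3 ≤ l.length) :
    Disjoint (cycleArcs l) (cycleArcs l.reverse) := by
  rw [cycleArcs_reverse, Set.disjoint_left]
  rintro ⟨a, b⟩ hab hba
  rw [Set.mem_preimage, Prod.swap_prod_mk] at hba
  obtain ⟨s, hs⟩ := exists_isRotated_cons_of_mem (fst_mem_of_mem_cycleArcs hab)
  rw [cycleArcs_eq_of_isRotated hs] at hab hba
  rw [hs.nodup_iff] at hl
  rw [hs.perm.length_eq] at hlen
  obtain ⟨x, y, t, rfl⟩ : ∃ x y t, s = x :: y :: t := by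
    match s, hlen with
    | x :: y :: t, _ => exact ⟨x, y, t, rfl⟩
  have fst_mem {p : V × V} (hp : p ∈ arcs (y :: t ++ [a])) : p.1 ∈ y :: t := by
    simpa only [List.dropLast_concat] using fst_mem_dropLast_of_mem_arcs hp
  simp only [cycleArcs_cons, List.cons_append, arcs_cons_cons, Set.mem_insert_iff,
    Prod.mk.injEq] at hab hba
  simp only [List.nodup_cons, List.mem_cons] at hl
  have hbx : b = x := by
    rcases hab with h | h | h
    · exact h.2
    · exact absurd (.inl h.1) hl.1
    · exact absurd (.inr (List.mem_cons.1 (fst_mem h))) hl.1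
  rcases hba with h | h | h
  · exact hl.1 (.inl h.2)
  · exact hl.1 (.inr (.inl h.2))
  · exact hl.2.1 (hbx ▸ List.mem_cons.1 (fst_mem h))

/-- The arcs of the symmetric orientation of the undirected cycle through the vertices of `l`, taken
in order. -/
def symmCycleArcs (l : List V) : Set (V × V) := cycleArcs l ∪ cycleArcs l.reverse

lemma symmCycleArcs_eq_of_isRotated {l l' : List V} (h : l ~r l') :
    symmCycleArcs l = symmCycleArcs l' := by
  rw [symmCycleArcs, symmCycleArcs, cycleArcs_eq_of_isRotated h,
    cycleArcs_eq_of_isRotated h.reverse]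

lemma symmCycleArcs_map (f : W → V) (l : List W) :
    symmCycleArcs (l.map f) = Prod.map f f '' symmCycleArcs l := by
  rw [symmCycleArcs, symmCycleArcs, ← List.map_reverse, cycleArcs_map, cycleArcs_map,
    Set.image_union]

end Arcs

section PathCover

variable {V W : Type*}

/-- The version of an oriented perfect path double cover for a set `A` of arcs: `P v` is a directed
path starting at `v`, each vertex is the end of exactly one path, and the paths partition `A`. -/
structure IsPerfectPathCover (A : Set (V × V)) (P : V → List V) : Prop where
  head : ∀ v, (P v).head? = some v
  nodup : ∀ v, (P v).Nodup
  arcs_subset : ∀ v, arcs (P v) ⊆ A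
  last : ∀ w, ∃! v, (P v).getLast? = some w
  cover : ∀ p ∈ A, ∃! v, p ∈ arcs (P v)

lemma hasOPPDC_iff {G : SimpleGraph V} :
    HasOPPDC G ↔ ∃ P, IsPerfectPathCover {p | G.Adj p.1 p.2} P := by
  refine exists_congr fun P => ⟨fun ⟨hpath, hlast, hcover⟩ => ?_, fun hP => ?_⟩
  · exact ⟨fun v => (hpath v).2.2.2, fun v => (hpath v).2.1,
      fun v => isChain_iff_forall_mem_arcs.1 (hpath v).2.2.1, hlast, fun p hp => hcover p.1 p.2 hp⟩
  · exact ⟨fun v => ⟨List.ne_nil_of_mem (List.mem_of_mem_head? (hP.head v)), hP.nodup v,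
      isChain_iff_forall_mem_arcs.2 (hP.arcs_subset v), hP.head v⟩, hP.last,
      fun a b h => hP.cover (a, b) h⟩

lemma forall_update_update [DecidableEq V] {f : V → W} {i j : V} {a b : W} {q : V → W → Prop}
    (hij : i ≠ j) (ha : q i a) (hb : q j b) (hf : ∀ v, v ≠ i → v ≠ j → q v (f v)) (v : V) :
    q v (Function.update (Function.update f i a) j b v) := by
  by_cases hvj : v = j <;> by_cases hvi : v = i <;> simp_all

namespace IsPerfectPathCover

variable {A : Set (V × V)} {P : V → List V}

lemma self_mem (hP : IsPerfectPathCover A P) (v : V) : v ∈ P v := List.mem_of_head? (hP.head v)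

lemma exists_eq_cons (hP : IsPerfectPathCover A P) (v : V) : ∃ t, P v = v :: t :=
  List.head?_eq_some_iff.1 (hP.head v)

lemma eq_singleton_of_mem (hP : IsPerfectPathCover A P) {x v : V}
    (hx : IsIsolatedIn A x) (hv : x ∈ P v) : P v = [x] :=
  (hx.mono (hP.arcs_subset v)).eq_singleton hv

lemma notMem_of_ne (hP : IsPerfectPathCover A P) {x v : V}
    (hx : IsIsolatedIn A x) (hv : v ≠ x) : x ∉ P v := fun h => by
  have hself := hP.self_mem v
  rw [hP.eq_singleton_of_mem hx h, List.mem_singleton] at hself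
  exact hv hself

lemma map_of_injective {A : Set (W × W)} {P : W → List W} (hP : IsPerfectPathCover A P)
    {f : W → V} (hf : f.Injective) :
    IsPerfectPathCover (Prod.map f f '' A)
      (Function.extend f (fun w => (P w).map f) fun v => [v]) := by
  set Q : V → List V := Function.extend f (fun w => (P w).map f) fun v => [v]
  have hQ (w : W) : Q (f w) = (P w).map f := hf.extend_apply _ _ w
  have hQ' (v : V) (hv : v ∉ Set.range f) : Q v = [v] := Function.extend_apply' _ _ v hv
  have arcs_Q (w : W) : arcs (Q (f w)) = Prod.map f f '' arcs (P w) := by rw [hQ, arcs_map]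
  refine ⟨fun v => ?_, fun v => ?_, fun v => ?_, fun v => ?_, ?_⟩
  · rcases em (v ∈ Set.range f) with ⟨w, rfl⟩ | hv
    · simp [hQ, hP.head]
    · simp [hQ' v hv]
  · rcases em (v ∈ Set.range f) with ⟨w, rfl⟩ | hv
    · exact hQ w ▸ (hP.nodup w).map hf
    · simp [hQ' v hv]
  · rcases em (v ∈ Set.range f) with ⟨w, rfl⟩ | hv
    · exact arcs_Q w ▸ Set.image_mono (hP.arcs_subset w)
    · simp [hQ' v hv]
  · rcases em (v ∈ Set.range f) with ⟨w, rfl⟩ | hv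
    · obtain ⟨u, hu, huniq⟩ := hP.last w
      refine ⟨f u, by simp [hQ, hu], fun u' hu' => ?_⟩
      rcases em (u' ∈ Set.range f) with ⟨u', rfl⟩ | hu'f
      · exact congrArg f (huniq u' (by simpa [hQ, hf.eq_iff] using hu'))
      · exact absurd ⟨w, by simpa [hQ' u' hu'f, eq_comm] using hu'⟩ hu'f
    · refine ⟨v, by simp [hQ' v hv], fun u' hu' => ?_⟩
      rcases em (u' ∈ Set.range f) with ⟨u', rfl⟩ | hu'f
      · obtain ⟨w, -, rfl⟩ : ∃ w, (P u').getLast? = some w ∧ f w = v := by simpa [hQ] using hu'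
        exact absurd (Set.mem_range_self w) hv
      · simpa [hQ' u' hu'f] using hu'
  · rintro _ ⟨p, hp, rfl⟩
    obtain ⟨w, hw, huniq⟩ := hP.cover p hp
    have mem_iff (w : W) : Prod.map f f p ∈ arcs (Q (f w)) ↔ p ∈ arcs (P w) := by
      rw [arcs_Q, (hf.prodMap hf).mem_set_image]
    refine ⟨f w, (mem_iff w).2 hw, fun v hv => ?_⟩
    rcases em (v ∈ Set.range f) with ⟨w', rfl⟩ | hvf
    · exact congrArg f (huniq w' ((mem_iff w').1 hv))
    · simp [hQ' v hvf] at hv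

lemma existsUnique_mem_arcs_update_update [DecidableEq V] (hP : IsPerfectPathCover A P) {i j : V}
    {e : V × V} {l l' : List V} (hij : i ≠ j) (hel : e ∉ arcs l)
    (arcs_l' : arcs l' = insert e (arcs (P i) ∪ arcs (P j))) (hA : Disjoint A (arcs l ∪ {e})) :
    ∀ p ∈ A ∪ (arcs l ∪ {e}), ∃! v, p ∈ arcs (Function.update (Function.update P i l) j l' v) := by
  intro p hp
  have eq_of_mem {c : V} := forall_update_update (f := P) (a := l) (b := l')
    (q := fun v m => p ∈ arcs m → v = c) hij
  rcases hp with hpA | hp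
  · obtain ⟨w, hw, huniq⟩ := hP.cover p hpA
    have mem_iff (v : V) : p ∈ arcs (P v) ↔ v = w := ⟨huniq v, fun h => h ▸ hw⟩
    obtain ⟨hpe, hpl⟩ : p ≠ e ∧ p ∉ arcs l := by simpa using Set.disjoint_left.1 hA hpA
    refine ⟨if w = i then j else w, ?_, eq_of_mem ?_ ?_ fun v hvi _ h => ?_⟩
    · by_cases hwi : w = i <;> by_cases hwj : w = j <;>
        simp [arcs_l', mem_iff, hwi, hwj, hpe]
    · exact fun h => absurd h hpl
    · intro h
      have : i = w ∨ j = w := by simpa [arcs_l', mem_iff, hpe] using h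
      grind
    · rw [mem_iff] at h
      grind
  · have hpP (v : V) : p ∉ arcs (P v) := fun h =>
      Set.disjoint_left.1 hA (hP.arcs_subset v h) hp
    have mem_l' : p ∈ arcs l' ↔ p = e := by simp [arcs_l', hpP]
    rcases hp with hpl | rfl
    · have hpl' : p ∉ arcs l' := fun h => hel (mem_l'.1 h ▸ hpl)
      exact ⟨i, by simpa [hij] using hpl, eq_of_mem (fun _ => rfl)
        (fun h => absurd h hpl') fun v _ _ h => absurd h (hpP v)⟩
    · exact ⟨j, by simpa using mem_l', eq_of_mem (fun h => absurd h hel)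
        (fun _ => rfl) fun v _ _ h => absurd h (hpP v)⟩

/-- The arcs of the cycle `l` other than its closing arc `(x, i)` form the new path starting at `i`.
The old paths starting at `i` and `j` are merged with the closing arc into the path `l'`. -/
lemma union_cycleArcs_update [DecidableEq V] (hP : IsPerfectPathCover A P) {i j x : V}
    {l l' : List V} (hij : i ≠ j) (hl : l.Nodup) (hi : l.head? = some i) (hx : l.getLast? = some x)
    (hjx : (P j).getLast? = some x) (hl' : l'.Nodup) (head_l' : l'.head? = some j)
    (last_l' : l'.getLast? = (P i).getLast?)
    (arcs_l' : arcs l' = insert (x, i) (arcs (P i) ∪ arcs (P j))) (hA : Disjoint A (cycleArcs l)) :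
    IsPerfectPathCover (A ∪ cycleArcs l) (Function.update (Function.update P i l) j l') := by
  have last_update : ∀ v, (Function.update (Function.update P i l) j l' v).getLast? =
      (P (Equiv.swap i j v)).getLast? := by
    refine forall_update_update
      (q := fun v (m : List V) => m.getLast? = (P (Equiv.swap i j v)).getLast?) hij ?_ ?_
      fun v hvi hvj => ?_
    · rw [Equiv.swap_apply_left, hx, hjx]
    · rw [Equiv.swap_apply_right, last_l']
    · rw [Equiv.swap_apply_of_ne_of_ne hvi hvj]
  have hxi : (x, i) ∉ arcs l := notMem_arcs_of_head? hl hi x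
  rw [cycleArcs_eq_arcs_union hi hx] at hA ⊢
  refine ⟨forall_update_update (q := fun v (m : List V) => m.head? = some v) hij hi head_l'
      fun v _ _ => hP.head v,
    forall_update_update (q := fun _ (m : List V) => m.Nodup) hij hl hl' fun v _ _ => hP.nodup v,
    forall_update_update (q := fun _ m => arcs m ⊆ _) hij ?_ ?_ fun v _ _ => ?_, fun w => ?_,
    hP.existsUnique_mem_arcs_update_update hij hxi arcs_l' hA⟩
  · exact Set.subset_union_left.trans Set.subset_union_right
  · rw [arcs_l']
    exact Set.insert_subset (.inr (.inr rfl))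
      ((Set.union_subset (hP.arcs_subset i) (hP.arcs_subset j)).trans Set.subset_union_left)
  · exact (hP.arcs_subset v).trans Set.subset_union_left
  · simp only [last_update]
    exact ((Equiv.swap i j).existsUnique_congr_right
      (q := fun v => (P v).getLast? = some w)).2 (hP.last w)

lemma union_cycleArcs_update_cons [DecidableEq V] (hP : IsPerfectPathCover A P) {u x : V}
    {l : List V} (hl : l.Nodup) (hu : l.head? = some u) (hx : l.getLast? = some x)
    (hPx : P x = [x]) (hxu : x ∉ P u) (hA : Disjoint A (cycleArcs l)) :
    IsPerfectPathCover (A ∪ cycleArcs l)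
      (Function.update (Function.update P u l) x (x :: P u)) := by
  obtain ⟨t, ht⟩ := hP.exists_eq_cons u
  have hux : u ≠ x := fun h => hxu (h ▸ hP.self_mem u)
  exact hP.union_cycleArcs_update hux hl hu hx (by simp [hPx])
    (List.nodup_cons.2 ⟨hxu, hP.nodup u⟩) rfl (by simp [ht]) (by simp [hPx, ht]) hA

lemma union_cycleArcs_update_append [DecidableEq V] (hP : IsPerfectPathCover A P) {a y w : V}
    {l : List V} (hl : l.Nodup) (hy : l.head? = some y) (ha : l.getLast? = some a)
    (hw : (P w).getLast? = some a) (hPy : P y = [y]) (hyw : y ∉ P w)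
    (hA : Disjoint A (cycleArcs l)) :
    IsPerfectPathCover (A ∪ cycleArcs l)
      (Function.update (Function.update P y l) w (P w ++ [y])) := by
  obtain ⟨t, ht⟩ := List.getLast?_eq_some_iff.1 hw
  have hne : y ≠ w := fun h => hyw (h ▸ hP.self_mem y)
  refine hP.union_cycleArcs_update hne hl hy ha hw
    (List.nodup_append_comm.1 (List.nodup_cons.2 ⟨hyw, hP.nodup w⟩)) (by simp [hP.head])
    (by simp [hPy]) ?_ hA
  rw [ht, List.append_assoc, List.singleton_append, arcs_append_cons]
  simp [hPy]

lemma exists_union_symmCycleArcs_of_adjacent (hP : IsPerfectPathCover A P) {x y z u : V}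
    {t : List V} (hc : (x :: y :: z :: t ++ [u]).Nodup)
    (hx : IsIsolatedIn A x) (hy : IsIsolatedIn A y)
    (hA : Disjoint A (symmCycleArcs (x :: y :: z :: t ++ [u]))) :
    ∃ P', IsPerfectPathCover (A ∪ symmCycleArcs (x :: y :: z :: t ++ [u])) P' := by
  classical
  have hrev := disjoint_cycleArcs_cycleArcs_reverse hc (by simp)
  set c := x :: y :: z :: t ++ [u] with hc_def
  have rot : c ~r z :: t ++ [u, x] ++ [y] := ⟨2, by simp [hc_def]⟩
  obtain ⟨hxy, hxz, hxu, hyz, hyu, hzu⟩ : x ≠ y ∧ x ≠ z ∧ x ≠ u ∧ y ≠ z ∧ y ≠ u ∧ z ≠ u := by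
    simp only [hc_def, List.cons_append, List.nodup_cons, List.mem_cons, List.mem_append] at hc
    grind
  rw [symmCycleArcs, Set.disjoint_union_right] at hA
  have h₁ := hP.union_cycleArcs_update_cons (List.nodup_reverse.2 hc) (u := u) (x := x)
    (by simp [hc_def]) List.getLast?_reverse (hP.eq_singleton_of_mem hx (hP.self_mem x))
    (hP.notMem_of_ne hx hxu.symm) hA.2
  have hA' := Set.disjoint_union_left.2 ⟨hA.1, hrev.symm⟩
  rw [symmCycleArcs, Set.union_comm (cycleArcs c), ← Set.union_assoc]
  rw [cycleArcs_eq_of_isRotated rot] at hA' ⊢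
  refine ⟨_, h₁.union_cycleArcs_update_cons (rot.nodup_iff.1 hc) rfl List.getLast?_concat ?_ ?_ hA'⟩
  · rw [Function.update_of_ne hxy.symm, Function.update_of_ne hyu]
    exact hP.eq_singleton_of_mem hy (hP.self_mem y)
  · rw [Function.update_of_ne hxz.symm, Function.update_of_ne hzu]
    exact hP.notMem_of_ne hy hyz.symm

lemma exists_union_symmCycleArcs_of_not_adjacent (hP : IsPerfectPathCover A P) {x y a u : V}
    {s r : List V} (hc : (x :: s ++ [a] ++ y :: r ++ [u]).Nodup)
    (hx : IsIsolatedIn A x) (hy : IsIsolatedIn A y)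
    (hA : Disjoint A (symmCycleArcs (x :: s ++ [a] ++ y :: r ++ [u]))) :
    ∃ P', IsPerfectPathCover (A ∪ symmCycleArcs (x :: s ++ [a] ++ y :: r ++ [u])) P' := by
  classical
  have hrev := disjoint_cycleArcs_cycleArcs_reverse hc (by simp; omega)
  set c := x :: s ++ [a] ++ y :: r ++ [u] with hc_def
  have rot : c ~r y :: r ++ u :: x :: s ++ [a] := by
    simpa [hc_def] using List.isRotated_append (l := x :: s ++ [a]) (l' := y :: r ++ [u])
  obtain ⟨hxy, hxa, hxu, hya, hyu⟩ : x ≠ y ∧ x ≠ a ∧ x ≠ u ∧ y ≠ a ∧ y ≠ u := by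
    simp only [hc_def, List.cons_append, List.append_assoc, List.nodup_cons, List.nodup_append,
      List.mem_cons, List.mem_append] at hc
    grind
  have hPy := hP.eq_singleton_of_mem hy (hP.self_mem y)
  have last_rev : c.reverse.getLast? = some x := List.getLast?_reverse
  rw [symmCycleArcs, Set.disjoint_union_right] at hA
  have h₁ := hP.union_cycleArcs_update_cons (List.nodup_reverse.2 hc) (u := u) (by simp [hc_def])
    last_rev (hP.eq_singleton_of_mem hx (hP.self_mem x)) (hP.notMem_of_ne hx hxu.symm) hA.2
  set P₁ := Function.update (Function.update P u c.reverse) x (x :: P u)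
  have P₁_of_ne {v : V} (hvx : v ≠ x) (hvu : v ≠ u) : P₁ v = P v := by simp [P₁, hvx, hvu]
  obtain ⟨w, hw, -⟩ := h₁.last a
  have hyw : y ∉ P₁ w := by
    rcases eq_or_ne w x with rfl | hwx
    · simp [P₁, hxy.symm, hP.notMem_of_ne hy hyu.symm]
    have hwu : w ≠ u := by
      rintro rfl
      simp [P₁, hxu.symm, last_rev, hxa] at hw
    rw [P₁_of_ne hwx hwu] at hw ⊢
    refine hP.notMem_of_ne hy ?_
    rintro rfl
    simp [hPy, hya] at hw
  have hA' := Set.disjoint_union_left.2 ⟨hA.1, hrev.symm⟩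
  rw [symmCycleArcs, Set.union_comm (cycleArcs c), ← Set.union_assoc]
  rw [cycleArcs_eq_of_isRotated rot] at hA' ⊢
  exact ⟨_, h₁.union_cycleArcs_update_append (rot.nodup_iff.1 hc) rfl List.getLast?_concat hw
    ((P₁_of_ne hxy.symm hyu).trans hPy) hyw hA'⟩

lemma exists_union_symmCycleArcs (hP : IsPerfectPathCover A P) {x y : V} {c : List V}
    (hc : c.Nodup) (hlen : 4 ≤ c.length) (hxc : x ∈ c) (hyc : y ∈ c) (hxy : x ≠ y)
    (hx : IsIsolatedIn A x) (hy : IsIsolatedIn A y) (hA : Disjoint A (symmCycleArcs c)) :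
    ∃ P', IsPerfectPathCover (A ∪ symmCycleArcs c) P' := by
  have of_cons_cons {x y : V} {m : List V} (h : c ~r x :: y :: m) (hx : IsIsolatedIn A x)
      (hy : IsIsolatedIn A y) : ∃ P', IsPerfectPathCover (A ∪ symmCycleArcs c) P' := by
    rw [h.nodup_iff] at hc
    rw [h.perm.length_eq] at hlen
    rw [symmCycleArcs_eq_of_isRotated h] at hA ⊢
    rcases m with - | ⟨z, m⟩
    · simp at hlen
    rcases m.eq_nil_or_concat' with rfl | ⟨t, u, rfl⟩
    · simp at hlen
    exact hP.exists_union_symmCycleArcs_of_adjacent hc hx hy hA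
  obtain ⟨m, hm⟩ := exists_isRotated_cons_of_mem hxc
  obtain ⟨s, r, rfl⟩ := List.append_of_mem
    (List.mem_of_ne_of_mem hxy.symm (hm.perm.mem_iff.1 hyc))
  rcases s.eq_nil_or_concat' with rfl | ⟨s, a, rfl⟩
  · exact of_cons_cons hm hx hy
  rcases r.eq_nil_or_concat' with rfl | ⟨r, u, rfl⟩
  · exact of_cons_cons (hm.trans (List.isRotated_append (l := x :: (s ++ [a])))) hy hx
  have hm' : c ~r x :: s ++ [a] ++ y :: r ++ [u] := by simpa using hm
  rw [symmCycleArcs_eq_of_isRotated hm'] at hA ⊢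
  exact hP.exists_union_symmCycleArcs_of_not_adjacent (hm'.nodup_iff.1 hc) hx hy hA

end IsPerfectPathCover

end PathCover

section CycleGraph

variable {n : ℕ}

lemma cycleGraph_adj (hn : 2 ≤ n) {a b : ZMod n} :
    (cycleGraph n).Adj a b ↔ b = a + 1 ∨ a = b + 1 := by
  have : Fact (1 < n) := ⟨hn⟩
  simp only [cycleGraph, SimpleGraph.fromRel_adj, and_iff_right_iff_imp]
  rintro (rfl | rfl) <;> simp

lemma cycleArcs_map_range_cast [NeZero n] :
    cycleArcs ((List.range n).map (Nat.cast : ℕ → ZMod n)) = {p | p.2 = p.1 + 1} := by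
  have head : ((List.range n).map (Nat.cast : ℕ → ZMod n)).head?.toList = [((n : ℕ) : ZMod n)] := by
    simp [List.head?_range, NeZero.ne n]
  have closed : (List.range n).map Nat.cast ++ [((n : ℕ) : ZMod n)] =
      (List.range (n + 1)).map Nat.cast := by simp [List.range_succ]
  ext ⟨a, b⟩
  rw [cycleArcs, head, closed, mem_arcs_iff_getElem]
  constructor
  · rintro ⟨i, hi, h⟩
    obtain ⟨rfl, rfl⟩ : a = (i : ZMod n) ∧ b = i + 1 := by simpa using h
    rfl
  · rintro (rfl : b = a + 1)
    exact ⟨a.val, by simpa using a.val_lt, by simp⟩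

lemma exists_symmCycleArcs_eq_cycleGraph (hn : 2 ≤ n) :
    ∃ c : List (ZMod n), c.Nodup ∧ c.length = n ∧ (∀ k, k ∈ c) ∧
      {p | (cycleGraph n).Adj p.1 p.2} = symmCycleArcs c := by
  have : NeZero n := ⟨by omega⟩
  refine ⟨(List.range n).map Nat.cast, ?_, by simp, fun k => ?_, ?_⟩
  · refine List.nodup_range.map_on fun i hi j hj h => ?_
    rw [ZMod.natCast_eq_natCast_iff'] at h
    simpa [Nat.mod_eq_of_lt (List.mem_range.1 hi), Nat.mod_eq_of_lt (List.mem_range.1 hj)] using h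
  · exact List.mem_map.2 ⟨k.val, List.mem_range.2 k.val_lt, ZMod.natCast_zmod_val k⟩
  · ext p
    simp [symmCycleArcs, cycleArcs_reverse, cycleArcs_map_range_cast, cycleGraph_adj hn]

end CycleGraph

section Subgraph

variable {V : Type*} {G : SimpleGraph V}

lemma exists_symmCycleArcs_eq_of_iso_cycleGraph {n : ℕ} (hn : 2 ≤ n) {C : G.Subgraph}
    (e : C.coe ≃g cycleGraph n) :
    ∃ c : List V, c.Nodup ∧ c.length = n ∧ (∀ v ∈ C.verts, v ∈ c) ∧
      {p | C.Adj p.1 p.2} = symmCycleArcs c := by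
  obtain ⟨c, hc, hlen, hmem, hadj⟩ := exists_symmCycleArcs_eq_cycleGraph hn
  refine ⟨c.map fun k => (e.symm k).val,
    hc.map (Subtype.val_injective.comp e.symm.injective), by simpa using hlen,
    fun v hv => List.mem_map.2 ⟨e ⟨v, hv⟩, hmem _, by simp⟩, ?_⟩
  rw [symmCycleArcs_map, ← hadj]
  ext ⟨a, b⟩
  constructor
  · exact fun h => ⟨(e ⟨a, C.edge_vert h⟩, e ⟨b, C.edge_vert h.symm⟩), e.map_rel_iff.2 h, by simp⟩
  · rintro ⟨p, hp, ⟨⟩⟩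
    exact e.symm.map_rel_iff.2 hp

lemma image_val_coe_adj (H : G.Subgraph) :
    Prod.map Subtype.val Subtype.val '' {p | H.coe.Adj p.1 p.2} = {p | H.Adj p.1 p.2} := by
  ext ⟨a, b⟩
  simp only [Set.mem_image, Set.mem_ofPred_eq, Prod.exists, Prod.map_apply, Prod.mk.injEq]
  constructor
  · rintro ⟨a, b, h, rfl, rfl⟩
    exact h
  · exact fun h => ⟨⟨a, H.edge_vert h⟩, ⟨b, H.edge_vert h.symm⟩, h, rfl, rfl⟩

lemma HasOPPDC.exists_isPerfectPathCover_subgraph {H : G.Subgraph} (h : HasOPPDC H.coe) :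
    ∃ P, IsPerfectPathCover {p | H.Adj p.1 p.2} P := by
  obtain ⟨P, hP⟩ := hasOPPDC_iff.1 h
  exact ⟨_, image_val_coe_adj H ▸ hP.map_of_injective Subtype.val_injective⟩

end Subgraph

theorem cycle_plus_graph_hasOPPDC_general {V : Type*} (G : SimpleGraph V) (C G' : G.Subgraph)
    (hdisj : C.edgeSet ∩ G'.edgeSet = ∅) (hcover : C.edgeSet ∪ G'.edgeSet = G.edgeSet)
    (hC : ∃ n : ℕ, 4 ≤ n ∧ Nonempty (C.coe ≃g cycleGraph n)) (hG' : HasOPPDC G'.coe)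
    (hnew : 2 ≤ (C.verts \ G'.verts).ncard) :
    HasOPPDC G := by
  obtain ⟨n, hn, ⟨e⟩⟩ := hC
  obtain ⟨c, hc, hlen, hmem, hadj⟩ := exists_symmCycleArcs_eq_of_iso_cycleGraph (by omega) e
  obtain ⟨P, hP⟩ := hG'.exists_isPerfectPathCover_subgraph
  have isolated {v : V} (hv : v ∉ G'.verts) : IsIsolatedIn {p | G'.Adj p.1 p.2} v :=
    fun p hp => ⟨fun h => hv (h ▸ G'.edge_vert hp), fun h => hv (h ▸ G'.edge_vert hp.symm)⟩
  obtain ⟨x, y, ⟨hxC, hxG'⟩, ⟨hyC, hyG'⟩, hxy⟩ :=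
    (Set.one_lt_ncard_iff (Set.finite_of_ncard_ne_zero (by omega))).1 hnew
  have disjoint : Disjoint {p | G'.Adj p.1 p.2} (symmCycleArcs c) := by
    rw [← hadj, Set.disjoint_left]
    exact fun p hG' hC => (Set.disjoint_iff_inter_eq_empty.2 hdisj).notMem_of_mem_left
      (a := s(p.1, p.2)) hC hG'
  have union : {p | G.Adj p.1 p.2} = {p | G'.Adj p.1 p.2} ∪ symmCycleArcs c := by
    rw [← hadj]
    ext p
    rw [Set.mem_union, or_comm]
    exact (Set.ext_iff.1 hcover s(p.1, p.2)).symm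
  exact hasOPPDC_iff.2 (union ▸ hP.exists_union_symmCycleArcs hc (hlen ▸ hn) (hmem x hxC)
    (hmem y hyC) hxy (isolated hxG') (isolated hyG') disjoint)

/-- if the edge set of a connected graph `G` is partitioned into a
cycle `C` of length at least 4 and a connected graph `G'` having an OPPDC, with
at least 2 vertices of `C` not in `G'`, then `G` has an OPPDC. -/
theorem cycle_plus_graph_hasOPPDC {V : Type*} [Fintype V] (G : SimpleGraph V)
    (hGconn : G.Connected)
    (C G' : G.Subgraph)
    (hCverts : C.verts = C.support) (hG'verts : G'.verts = G'.support)
    (hdisj : C.edgeSet ∩ G'.edgeSet = ∅)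
    (hcover : C.edgeSet ∪ G'.edgeSet = G.edgeSet)
    (hC : ∃ n : ℕ, 4 ≤ n ∧ Nonempty (C.coe ≃g cycleGraph n))
    (hG'conn : G'.coe.Connected)
    (hG' : HasOPPDC G'.coe)
    (hnew : 2 ≤ (C.verts \ G'.verts).ncard) :
    HasOPPDC G :=
  cycle_plus_graph_hasOPPDC_general G C G' hdisj hcover hC hG' hnew
end

section
/- Every 4-regular graph with a cut vertex has an oriented perfect path double cover. -/
/-! A path cover is kept as a multiset of vertex lists, so that a local change of the cover is an
identity between multisets. A new vertex `x` enters a cover as the trivial path `[x]`; its edges are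
added one or two at a time, by splitting a path at a neighbour of `x` and joining one half to `[x]`,
by crossing two paths at their starts or ends, or by rerouting through `x` the two paths that use an
auxiliary edge between two neighbours of `x`.

By strong induction this covers every graph of maximum degree at most four that is 3-degenerate and
has no triangle component. A vertex of degree at most two, or of degree three with two nonadjacent
neighbours, can be removed, unless a small component (a 4-cycle or `K₄` minus an edge) or a bridge
splits off. Otherwise some vertex of degree three has a complete closed neighbourhood, and this
`K₄`, or the `K₅` minus an edge containing it, is removed instead.

A connected graph of maximum degree at most four that is not 4-regular is of this kind when it has
a cut vertex. In the 4-regular case both sides of the cut vertex `v` are, and their covers are glued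
by concatenating the path of one that ends at `v` with the path of the other that starts at `v`.
-/

namespace PathCover

variable {V : Type*}

section Arcs

/-- The multiset of arcs traversed by a list of vertices. -/
def arcs (p : List V) : Multiset (V × V) := ↑(p.zip p.tail)

variable {p : List V} {a b c : V}

@[simp] theorem arcs_singleton (a : V) : arcs [a] = 0 := rfl

@[simp] theorem arcs_cons_cons (a b : V) (l : List V) :
    arcs (a :: b :: l) = {(a, b)} + arcs (b :: l) := rfl

theorem arcs_append_cons (l₁ l₂ : List V) (a : V) :
    arcs (l₁ ++ a :: l₂) = arcs (l₁ ++ [a]) + arcs (a :: l₂) := by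
  induction l₁ with
  | nil => simp
  | cons b l₁ ih =>
    cases l₁ with
    | nil => simp
    | cons c l₁ => simpa [add_assoc] using ih

theorem arcs_append_cons_cons (l₁ l₂ : List V) (a b : V) :
    arcs (l₁ ++ a :: b :: l₂) = arcs (l₁ ++ [a]) + ({(a, b)} + arcs (b :: l₂)) := by
  rw [arcs_append_cons, arcs_cons_cons]

theorem mem_arcs_iff : (a, b) ∈ arcs p ↔ ∃ l₁ l₂, p = l₁ ++ a :: b :: l₂ := by
  refine ⟨fun h => ?_, ?_⟩
  · induction p with
    | nil => simp [arcs] at h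
    | cons c l ih =>
      cases l with
      | nil => simp at h
      | cons d l =>
        rw [arcs_cons_cons, Multiset.mem_add, Multiset.mem_singleton, Prod.mk.injEq] at h
        obtain ⟨rfl, rfl⟩ | h := h
        · exact ⟨[], l, rfl⟩
        · obtain ⟨l₁, l₂, h⟩ := ih h
          exact ⟨c :: l₁, l₂, by rw [h, List.cons_append]⟩
  · rintro ⟨l₁, l₂, rfl⟩
    simp [arcs_append_cons_cons]

theorem map_snd_arcs (p : List V) : (arcs p).map Prod.snd = p.tail := by
  rw [arcs, Multiset.map_coe, List.map_snd_zip (by simp)]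

theorem fst_mem_of_mem_arcs (h : (a, b) ∈ arcs p) : a ∈ p := (List.of_mem_zip h).1

theorem snd_mem_tail_of_mem_arcs (h : (a, b) ∈ arcs p) : b ∈ p.tail := (List.of_mem_zip h).2

theorem head?_ne_of_mem_arcs (hp : p.Nodup) (h : (a, b) ∈ arcs p) : p.head? ≠ some b := by
  rintro hb
  obtain ⟨l, rfl⟩ := List.head?_eq_some_iff.1 hb
  exact (List.nodup_cons.1 hp).1 (snd_mem_tail_of_mem_arcs h)

theorem fst_eq_of_mem_arcs (hp : p.Nodup) (ha : (a, c) ∈ arcs p) (hb : (b, c) ∈ arcs p) :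
    a = b := by
  have hnodup : ((arcs p).map Prod.snd).Nodup := by
    rw [map_snd_arcs]
    exact hp.tail
  exact congrArg Prod.fst (Multiset.inj_on_of_nodup_map hnodup _ ha _ hb rfl)

theorem swap_notMem_arcs (hp : p.Nodup) (h : (a, b) ∈ arcs p) : (b, a) ∉ arcs p := by
  obtain ⟨l₁, l₂, rfl⟩ := mem_arcs_iff.1 h
  rw [arcs_append_cons_cons, Multiset.mem_add, Multiset.mem_add, Multiset.mem_singleton]
  rintro (hba | hba | hba)
  · have := fst_mem_of_mem_arcs hba
    grind
  · grind
  · have := snd_mem_tail_of_mem_arcs hba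
    grind

end Arcs

/-- `M` is an oriented perfect path double cover of the directed multigraph with vertex set `S`
and arc multiset `D`. -/
structure IsPathCover (S : Finset V) (D : Multiset (V × V)) (M : Multiset (List V)) : Prop where
  nodup : ∀ p ∈ M, p.Nodup
  map_head? : M.map List.head? = S.val.map some
  map_getLast? : M.map List.getLast? = S.val.map some
  bind_arcs : M.bind arcs = D

/-- The two orientations of the edge `ab`. -/
def edgeArcs (a b : V) : Multiset (V × V) := {(a, b), (b, a)}

section Multiset

variable {α : Type*} {M : Multiset α} {a b : α}

theorem exists_eq_cons_cons (ha : a ∈ M) (hb : b ∈ M) (hab : a ≠ b) : ∃ N, M = a ::ₘ b ::ₘ N := by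
  obtain ⟨N, rfl⟩ := Multiset.exists_cons_of_mem ha
  obtain ⟨N, rfl⟩ := Multiset.exists_cons_of_mem ((Multiset.mem_cons.1 hb).resolve_left hab.symm)
  exact ⟨N, rfl⟩

theorem cons_cons_cons_rotate (a b c : α) (M : Multiset α) :
    a ::ₘ b ::ₘ c ::ₘ M = b ::ₘ c ::ₘ a ::ₘ M := by
  rw [Multiset.cons_swap a b, Multiset.cons_swap a c]

end Multiset

namespace IsPathCover

variable {S S₁ S₂ : Finset V} {D D' D₁ D₂ : Multiset (V × V)} {M N P : Multiset (List V)}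
  {p q p' q' l₁ l₂ l₃ l₄ : List V} {u v x : V}

theorem exists_head?_eq (h : IsPathCover S D M) (hv : v ∈ S) : ∃ p ∈ M, p.head? = some v :=
  Multiset.mem_map.1 (h.map_head? ▸ Multiset.mem_map_of_mem some hv)

theorem exists_getLast?_eq (h : IsPathCover S D M) (hv : v ∈ S) : ∃ p ∈ M, p.getLast? = some v :=
  Multiset.mem_map.1 (h.map_getLast? ▸ Multiset.mem_map_of_mem some hv)

theorem exists_mem_arcs (h : IsPathCover S D M) {e : V × V} (he : e ∈ D) : ∃ p ∈ M, e ∈ arcs p :=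
  Multiset.mem_bind.1 (h.bind_arcs ▸ he)

theorem head?_injOn (h : IsPathCover S D M) (hp : p ∈ M) (hq : q ∈ M)
    (hpq : p.head? = q.head?) : p = q :=
  Multiset.inj_on_of_nodup_map
    (h.map_head? ▸ S.nodup.map (Option.some_injective _)) p hp q hq hpq

theorem getLast?_injOn (h : IsPathCover S D M) (hp : p ∈ M) (hq : q ∈ M)
    (hpq : p.getLast? = q.getLast?) : p = q :=
  Multiset.inj_on_of_nodup_map
    (h.map_getLast? ▸ S.nodup.map (Option.some_injective _)) p hp q hq hpq

theorem eq_of_mem_arcs (h : IsPathCover S D M) (hD : D.Nodup) (hp : p ∈ M) (hq : q ∈ M)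
    {e : V × V} (hep : e ∈ arcs p) (heq : e ∈ arcs q) : p = q := by
  by_contra hne
  obtain ⟨N, rfl⟩ := exists_eq_cons_cons hp hq hne
  have hdisj : (arcs p + (arcs q + N.bind arcs)).Nodup := by
    simpa [h.bind_arcs.symm] using hD
  exact Multiset.disjoint_left.1 (Multiset.nodup_add.1 hdisj).2.2 hep
    (Multiset.mem_add.2 (.inl heq))

theorem exists_head?_mem (h : IsPathCover S D M) (hp : p ∈ M) : ∃ v ∈ S, p.head? = some v := by
  obtain ⟨v, hv, hpv⟩ := Multiset.mem_map.1 (h.map_head? ▸ Multiset.mem_map_of_mem List.head? hp)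
  exact ⟨v, hv, hpv.symm⟩

theorem mem_of_mem (h : IsPathCover S D M) (hD : ∀ e ∈ D, e.2 ∈ S) (hp : p ∈ M)
    (hv : v ∈ p) : v ∈ S := by
  obtain ⟨u, hu, hpu⟩ := h.exists_head?_mem hp
  obtain ⟨l, rfl⟩ := List.head?_eq_some_iff.1 hpu
  obtain rfl | hv := List.mem_cons.1 hv
  · exact hu
  have hv' : v ∈ (arcs (u :: l)).map Prod.snd := by rwa [map_snd_arcs]
  obtain ⟨e, he, rfl⟩ := Multiset.mem_map.1 hv'
  exact hD e (h.bind_arcs ▸ Multiset.mem_bind.2 ⟨_, hp, he⟩)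

/-- A vertex lies on one path that starts at it and on one further path for each arc into it. -/
theorem exists_mem_ne_ne (h : IsPathCover S D M) {c : V} (hc : c ∈ S) (hu : (u, c) ∈ D)
    (hv : (v, c) ∈ D) (huv : u ≠ v) (p q : List V) : ∃ r ∈ M, c ∈ r ∧ r ≠ p ∧ r ≠ q := by
  obtain ⟨r₁, hr₁, hc₁⟩ := h.exists_head?_eq hc
  obtain ⟨r₂, hr₂, hc₂⟩ := h.exists_mem_arcs hu
  obtain ⟨r₃, hr₃, hc₃⟩ := h.exists_mem_arcs hv
  have h₁₂ : r₁ ≠ r₂ := by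
    rintro rfl
    exact head?_ne_of_mem_arcs (h.nodup _ hr₁) hc₂ hc₁
  have h₁₃ : r₁ ≠ r₃ := by
    rintro rfl
    exact head?_ne_of_mem_arcs (h.nodup _ hr₁) hc₃ hc₁
  have h₂₃ : r₂ ≠ r₃ := by
    rintro rfl
    exact huv (fst_eq_of_mem_arcs (h.nodup _ hr₂) hc₂ hc₃)
  have := List.mem_of_head? hc₁
  have := List.mem_of_mem_tail (snd_mem_tail_of_mem_arcs hc₂)
  have := List.mem_of_mem_tail (snd_mem_tail_of_mem_arcs hc₃)
  grind

theorem exists_eq_of_add_edgeArcs (h : IsPathCover S (D + edgeArcs u v) M) :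
    ∃ l₁ l₂ l₃ l₄ N, M = (l₁ ++ u :: v :: l₂) ::ₘ (l₃ ++ v :: u :: l₄) ::ₘ N := by
  obtain ⟨p, hp, huv⟩ := h.exists_mem_arcs (e := (u, v)) (by simp [edgeArcs])
  obtain ⟨q, hq, hvu⟩ := h.exists_mem_arcs (e := (v, u)) (by simp [edgeArcs])
  have hpq : p ≠ q := by
    rintro rfl
    exact swap_notMem_arcs (h.nodup p hp) huv hvu
  obtain ⟨l₁, l₂, rfl⟩ := mem_arcs_iff.1 huv
  obtain ⟨l₃, l₄, rfl⟩ := mem_arcs_iff.1 hvu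
  obtain ⟨N, rfl⟩ := exists_eq_cons_cons hp hq hpq
  exact ⟨l₁, l₂, l₃, l₄, N, rfl⟩

theorem insert_isolated [DecidableEq V] (h : IsPathCover S D M) (hx : x ∉ S) :
    IsPathCover (insert x S) D ([x] ::ₘ M) where
  nodup p hp := by
    obtain rfl | hp := Multiset.mem_cons.1 hp
    · exact List.nodup_singleton x
    · exact h.nodup p hp
  map_head? := by simp [Finset.insert_val_of_notMem hx, h.map_head?]
  map_getLast? := by simp [Finset.insert_val_of_notMem hx, h.map_getLast?]
  bind_arcs := by simp [h.bind_arcs]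

theorem replace_pair (h : IsPathCover S D (p ::ₘ q ::ₘ N)) (hp' : p'.Nodup) (hq' : q'.Nodup)
    (hhead : ({p'.head?, q'.head?} : Multiset (Option V)) = {p.head?, q.head?})
    (hlast : ({p'.getLast?, q'.getLast?} : Multiset (Option V)) = {p.getLast?, q.getLast?})
    (harcs : arcs p' + arcs q' + D = arcs p + arcs q + D') :
    IsPathCover S D' (p' ::ₘ q' ::ₘ N) where
  nodup r hr := by
    have hN := h.nodup r
    simp only [Multiset.mem_cons] at hr hN
    grind
  map_head? := by
    rw [← h.map_head?]
    simpa using congrArg (· + N.map List.head?) hhead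
  map_getLast? := by
    rw [← h.map_getLast?]
    simpa using congrArg (· + N.map List.getLast?) hlast
  bind_arcs := by
    rw [← h.bind_arcs] at harcs
    refine add_left_cancel (a := arcs p + arcs q) ?_
    rw [← harcs]
    simp only [Multiset.cons_bind]
    abel

theorem join_singleton (h : IsPathCover S D ([x] ::ₘ (l₁ ++ u :: l₂) ::ₘ N))
    (hx : x ∉ l₁ ++ u :: l₂) :
    IsPathCover S (D + edgeArcs x u) ((x :: u :: l₂) ::ₘ (l₁ ++ [u, x]) ::ₘ N) := by
  have hnodup := h.nodup (l₁ ++ u :: l₂) (by simp)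
  refine h.replace_pair (by grind) (by grind) (by simp) ?_ ?_
  · simpa [List.getLast?_cons] using Multiset.pair_comm _ _
  · simp [arcs_append_cons_cons, arcs_append_cons l₁ l₂, edgeArcs, ← Multiset.singleton_add]
    abel

theorem cross_heads (h : IsPathCover S D ((u :: l₁) ::ₘ (v :: l₂) ::ₘ N)) (hv : v ∉ u :: l₁)
    (hu : u ∉ v :: l₂) :
    IsPathCover S (D + edgeArcs u v) ((v :: u :: l₁) ::ₘ (u :: v :: l₂) ::ₘ N) := by
  have hnodup₁ := h.nodup (u :: l₁) (by simp)
  have hnodup₂ := h.nodup (v :: l₂) (by simp)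
  refine h.replace_pair (by grind) (by grind) (Multiset.pair_comm _ _) (by simp) ?_
  simp [edgeArcs, ← Multiset.singleton_add]
  abel

theorem cross_tails (h : IsPathCover S D ((l₁ ++ [u]) ::ₘ (l₂ ++ [v]) ::ₘ N))
    (hv : v ∉ l₁ ++ [u]) (hu : u ∉ l₂ ++ [v]) :
    IsPathCover S (D + edgeArcs u v) ((l₁ ++ [u, v]) ::ₘ (l₂ ++ [v, u]) ::ₘ N) := by
  have hnodup₁ := h.nodup (l₁ ++ [u]) (by simp)
  have hnodup₂ := h.nodup (l₂ ++ [v]) (by simp)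
  refine h.replace_pair (by grind) (by grind) (by simp) ?_ ?_
  · simpa using Multiset.pair_comm _ _
  · simp [arcs_append_cons_cons, edgeArcs, ← Multiset.singleton_add]
    abel

theorem detour (h : IsPathCover S (D + edgeArcs u v)
      ((l₁ ++ u :: v :: l₂) ::ₘ (l₃ ++ v :: u :: l₄) ::ₘ N))
    (hx₁ : x ∉ l₁ ++ u :: v :: l₂) (hx₂ : x ∉ l₃ ++ v :: u :: l₄) :
    IsPathCover S (D + edgeArcs x u + edgeArcs x v)
      ((l₁ ++ u :: x :: v :: l₂) ::ₘ (l₃ ++ v :: x :: u :: l₄) ::ₘ N) := by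
  have hnodup₁ := h.nodup (l₁ ++ u :: v :: l₂) (by simp)
  have hnodup₂ := h.nodup (l₃ ++ v :: u :: l₄) (by simp)
  refine h.replace_pair (by grind) (by grind) (by simp) (by simp) ?_
  simp [arcs_append_cons_cons, edgeArcs, ← Multiset.singleton_add]
  abel

theorem exists_add_matching (h : IsPathCover S D M) {E : Finset (V × V)}
    (hES : ∀ e ∈ E, e.1 ∈ S ∧ e.2 ∈ S)
    (hE : (E : Set (V × V)).Pairwise fun e f => e.1 ≠ f.1 ∧ e.1 ≠ f.2 ∧ e.2 ≠ f.1 ∧ e.2 ≠ f.2)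
    (hM : ∀ e ∈ E, ∀ p ∈ M,
      (p.getLast? = some e.1 → e.2 ∉ p) ∧ (p.getLast? = some e.2 → e.1 ∉ p)) :
    ∃ M', IsPathCover S (D + ∑ e ∈ E, edgeArcs e.1 e.2) M' := by
  classical
  induction E using Finset.induction generalizing D M with
  | empty => exact ⟨M, by simpa using h⟩
  | insert e E he ih =>
    obtain ⟨u, v⟩ := e
    simp only [Finset.mem_insert, forall_eq_or_imp] at hES hM
    rw [Finset.coe_insert, Set.pairwise_insert] at hE
    obtain ⟨p, hp, hpu⟩ := h.exists_getLast?_eq hES.1.1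
    obtain ⟨q, hq, hqv⟩ := h.exists_getLast?_eq hES.1.2
    have hvp := (hM.1 p hp).1 hpu
    have huq := (hM.1 q hq).2 hqv
    have hpq : p ≠ q := by
      rintro rfl
      exact huq (List.mem_of_getLast? hpu)
    obtain ⟨l₁, rfl⟩ := List.getLast?_eq_some_iff.1 hpu
    obtain ⟨l₂, rfl⟩ := List.getLast?_eq_some_iff.1 hqv
    obtain ⟨N, rfl⟩ := exists_eq_cons_cons hp hq hpq
    have hcross := h.cross_tails hvp huq
    rw [Finset.sum_insert he, ← add_assoc]
    refine ih hcross hES.2 hE.1 fun e heE p hp => ?_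
    obtain ⟨hne, -⟩ := hE.2 e heE (by rintro rfl; exact he heE)
    simp only [Multiset.mem_cons] at hp
    obtain rfl | rfl | hp := hp
    · simp [hne]
    · simp [hne]
    · exact hM.2 e heE p (by simp [hp])

theorem disjUnion [DecidableEq V] (h₁ : IsPathCover S₁ D₁ P) (h₂ : IsPathCover S₂ D₂ N)
    (hd : Disjoint S₁ S₂) : IsPathCover (S₁ ∪ S₂) (D₁ + D₂) (P + N) := by
  have hval : (S₁ ∪ S₂).val = S₁.val + S₂.val := by
    rw [← Finset.disjUnion_eq_union _ _ hd, Finset.disjUnion_val]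
  exact
    { nodup p hp := (Multiset.mem_add.1 hp).elim (h₁.nodup p) (h₂.nodup p)
      map_head? := by
        rw [hval, Multiset.map_add, Multiset.map_add, h₁.map_head?, h₂.map_head?]
      map_getLast? := by
        rw [hval, Multiset.map_add, Multiset.map_add, h₁.map_getLast?, h₂.map_getLast?]
      bind_arcs := by rw [Multiset.add_bind, h₁.bind_arcs, h₂.bind_arcs] }

theorem glue [DecidableEq V] (h₁ : IsPathCover S₁ D₁ ((l₁ ++ [v]) ::ₘ P))
    (h₂ : IsPathCover S₂ D₂ ((v :: l₂) ::ₘ N)) (hv : S₁ ∩ S₂ = {v})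
    (hnodup : (l₁ ++ v :: l₂).Nodup) :
    IsPathCover (S₁ ∪ S₂) (D₁ + D₂) ((l₁ ++ v :: l₂) ::ₘ (P + N)) := by
  have hval : {some v} + (S₁ ∪ S₂).val.map some = S₁.val.map some + S₂.val.map some := by
    rw [← Multiset.map_add, ← Multiset.union_add_inter S₁.val, ← Finset.inter_val, hv,
      ← Finset.union_val, Multiset.map_add, add_comm]
    rfl
  refine ⟨fun p hp => ?_, ?_, ?_, ?_⟩
  · obtain rfl | hp := Multiset.mem_cons.1 hp
    · exact hnodup
    · exact (Multiset.mem_add.1 hp).elim (fun hp => h₁.nodup p (Multiset.mem_cons_of_mem hp))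
        fun hp => h₂.nodup p (Multiset.mem_cons_of_mem hp)
  · refine add_left_cancel (a := {some v}) (Eq.trans ?_ hval.symm)
    rw [← h₁.map_head?, ← h₂.map_head?]
    cases l₁ <;> simp [← Multiset.singleton_add] <;> abel
  · refine add_left_cancel (a := {some v}) (Eq.trans ?_ hval.symm)
    rw [← h₁.map_getLast?, ← h₂.map_getLast?]
    simp [← Multiset.singleton_add, List.getLast?_cons]
    abel
  · rw [← h₁.bind_arcs, ← h₂.bind_arcs]
    simp only [Multiset.cons_bind, Multiset.add_bind, arcs_append_cons l₁ l₂ v]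
    abel

end IsPathCover

section InducedArcs

open Classical in
/-- The arcs of the symmetric orientation of `G` from `S` to `T`. The decidability instance is
classical so that `G` can be varied freely. -/
noncomputable def arcsBetween (G : SimpleGraph V) (S T : Finset V) : Finset (V × V) :=
  G.interedges S T

open Classical in
/-- The neighbours of `v` in `S`. -/
noncomputable def nbrs (G : SimpleGraph V) (S : Finset V) (v : V) : Finset V :=
  S.filter (G.Adj v)

variable {G : SimpleGraph V} {S T : Finset V} {a b u v w x : V}

@[simp] theorem mem_arcsBetween : (a, b) ∈ arcsBetween G S T ↔ a ∈ S ∧ b ∈ T ∧ G.Adj a b := by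
  classical exact G.mk_mem_interedges_iff

@[simp] theorem mem_nbrs : w ∈ nbrs G S v ↔ w ∈ S ∧ G.Adj v w := by
  classical exact Finset.mem_filter

theorem nbrs_subset (G : SimpleGraph V) (S : Finset V) (v : V) : nbrs G S v ⊆ S := fun _ hw =>
  (mem_nbrs.1 hw).1

theorem nbrs_mono (h : T ⊆ S) (v : V) : nbrs G T v ⊆ nbrs G S v := fun _ hw =>
  mem_nbrs.2 ⟨h (mem_nbrs.1 hw).1, (mem_nbrs.1 hw).2⟩

open Classical in
theorem nbrs_insert [DecidableEq V] :
    nbrs G (insert x S) v = if G.Adj v x then insert x (nbrs G S v) else nbrs G S v := by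
  ext w
  split_ifs <;> simp only [mem_nbrs, Finset.mem_insert] <;> grind

open Classical in
theorem nbrs_singleton : nbrs G {x} v = if G.Adj v x then {x} else ∅ := by
  ext w
  split_ifs <;> simp only [mem_nbrs, Finset.mem_singleton, Finset.notMem_empty] <;> grind

theorem sum_edgeArcs (E : Finset (V × V)) :
    ∑ e ∈ E, edgeArcs e.1 e.2 = E.val + E.val.map Prod.swap := by
  classical
  induction E using Finset.induction with
  | empty => rfl
  | insert e E he ih =>
    rw [Finset.sum_insert he, ih, Finset.insert_val_of_notMem he, edgeArcs]
    simp only [Multiset.insert_eq_cons, ← Multiset.singleton_add, Multiset.map_add,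
      Multiset.map_singleton, Prod.swap]
    abel

theorem arcsBetween_union [DecidableEq V] (hd : Disjoint S T) :
    (arcsBetween G (S ∪ T) (S ∪ T)).val = (arcsBetween G S S).val + (arcsBetween G T T).val +
      ∑ e ∈ arcsBetween G S T, edgeArcs e.1 e.2 := by
  rw [Finset.disjoint_left] at hd
  have hswap : ((arcsBetween G S T).val.map Prod.swap).Nodup :=
    (arcsBetween G S T).nodup.map Prod.swap_injective
  rw [sum_edgeArcs, (Finset.nodup _).ext]
  · rintro ⟨u, v⟩
    simp only [Multiset.mem_add, Multiset.mem_map, Finset.mem_val, Prod.exists, Prod.swap_prod_mk,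
      Prod.mk.injEq, mem_arcsBetween, Finset.mem_union, G.adj_comm u v]
    grind
  · simp only [Multiset.nodup_add, Finset.nodup, hswap, Multiset.disjoint_left, Multiset.mem_add,
      Multiset.mem_map, Finset.mem_val, Prod.exists, Prod.forall, Prod.swap_prod_mk, Prod.mk.injEq,
      mem_arcsBetween]
    grind

@[simp] theorem arcsBetween_singleton (G : SimpleGraph V) (x : V) : arcsBetween G {x} {x} = ∅ := by
  ext ⟨u, v⟩
  simp +contextual

theorem arcsBetween_insert [DecidableEq V] (hx : x ∉ S) :
    (arcsBetween G (insert x S) (insert x S)).val =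
      (arcsBetween G S S).val + ∑ u ∈ nbrs G S x, edgeArcs x u := by
  have himage : arcsBetween G {x} S = (nbrs G S x).image (Prod.mk x) := by
    ext ⟨u, v⟩
    simp only [mem_arcsBetween, Finset.mem_singleton, Finset.mem_image, mem_nbrs, Prod.mk.injEq]
    grind
  rw [Finset.insert_eq, arcsBetween_union (Finset.disjoint_singleton_left.2 hx), himage,
    Finset.sum_image (by simp)]
  simp

theorem sup_edge_adj_iff (hab : a ≠ b) :
    (G ⊔ SimpleGraph.edge a b).Adj u v ↔ G.Adj u v ∨ (u = a ∧ v = b) ∨ (u = b ∧ v = a) := by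
  rw [SimpleGraph.sup_adj, SimpleGraph.edge_adj]
  grind

theorem arcsBetween_sup_edge (ha : a ∈ S) (hb : b ∈ S) (hab : a ≠ b) (hG : ¬G.Adj a b) :
    (arcsBetween (G ⊔ SimpleGraph.edge a b) S S).val = (arcsBetween G S S).val + edgeArcs a b := by
  have hG' : ¬G.Adj b a := fun h => hG h.symm
  rw [(Finset.nodup _).ext]
  · rintro ⟨u, v⟩
    simp only [edgeArcs, Multiset.mem_add, Finset.mem_val, mem_arcsBetween, sup_edge_adj_iff hab,
      Multiset.insert_eq_cons, Multiset.mem_cons, Multiset.mem_singleton, Prod.mk.injEq]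
    grind
  · simp [Multiset.nodup_add, edgeArcs, hab, hG, hG', Finset.nodup]

end InducedArcs

/-- The subgraph of `G` induced by `S` has an oriented perfect path double cover. -/
def Coverable (G : SimpleGraph V) (S : Finset V) : Prop :=
  ∃ M, IsPathCover S (arcsBetween G S S).val M

section CoverableOps

variable {G : SimpleGraph V} {S T S₁ S₂ : Finset V} {M : Multiset (List V)} {p : List V}
  {a b c v x : V}

theorem IsPathCover.subset (h : IsPathCover S (arcsBetween G S S).val M) (hp : p ∈ M)
    (hv : v ∈ p) : v ∈ S :=
  h.mem_of_mem (fun _ he => (mem_arcsBetween.1 he).2.1) hp hv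

theorem IsPathCover.exists_mem_of_two_le_card_nbrs {D : Multiset (V × V)}
    (h : IsPathCover S D M) (hD : (arcsBetween G S S).val ⊆ D) (hc : c ∈ S)
    (hdeg : 2 ≤ (nbrs G S c).card) (p q : List V) : ∃ r ∈ M, c ∈ r ∧ r ≠ p ∧ r ≠ q := by
  obtain ⟨u, hu, v, hv, huv⟩ := Finset.one_lt_card.1 hdeg
  rw [mem_nbrs] at hu hv
  exact h.exists_mem_ne_ne hc (hD (mem_arcsBetween.2 ⟨hu.1, hc, hu.2.symm⟩))
    (hD (mem_arcsBetween.2 ⟨hv.1, hc, hv.2.symm⟩)) huv p q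

theorem IsPathCover.isChain (h : IsPathCover S (arcsBetween G S S).val M) (hp : p ∈ M) :
    p.IsChain G.Adj := by
  rw [List.isChain_iff_forall_rel_of_append_cons_cons]
  intro a b l₁ l₂ hl
  have hab : (a, b) ∈ M.bind arcs := Multiset.mem_bind.2 ⟨p, hp, mem_arcs_iff.2 ⟨l₁, l₂, hl⟩⟩
  rw [h.bind_arcs] at hab
  exact (mem_arcsBetween.1 hab).2.2

theorem Coverable.empty (G : SimpleGraph V) : Coverable G ∅ :=
  ⟨0, by simp, rfl, rfl, by simp [arcsBetween, SimpleGraph.interedges, Rel.interedges]⟩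

variable [DecidableEq V]

namespace Coverable

theorem insert_of_card_nbrs_le_one (h : Coverable G S) (hx : x ∉ S)
    (hdeg : (nbrs G S x).card ≤ 1) : Coverable G (insert x S) := by
  obtain ⟨M, hM⟩ := h
  have hMx := hM.insert_isolated hx
  rw [Coverable, arcsBetween_insert hx]
  obtain hzero | hone := Nat.le_one_iff_eq_zero_or_eq_one.1 hdeg
  · rw [Finset.card_eq_zero.1 hzero]
    exact ⟨_, by simpa using hMx⟩
  · obtain ⟨u, hu⟩ := Finset.card_eq_one.1 hone
    have huS : u ∈ S := nbrs_subset G S x (hu ▸ Finset.mem_singleton_self u)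
    obtain ⟨p, hp, hpu⟩ := hM.exists_head?_eq huS
    have hxp : x ∉ p := fun hxp => hx (hM.subset hp hxp)
    obtain ⟨l, rfl⟩ := List.head?_eq_some_iff.1 hpu
    obtain ⟨N, rfl⟩ := Multiset.exists_cons_of_mem hp
    rw [hu, Finset.sum_singleton]
    exact ⟨_, hMx.join_singleton (l₁ := []) hxp⟩

theorem insert_pair (h : Coverable G S) (hx : x ∉ S) (hab : a ≠ b) (hnbrs : nbrs G S x = {a, b})
    (ha : 2 ≤ (nbrs G S a).card) : Coverable G (insert x S) := by
  obtain ⟨M, hM⟩ := h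
  have haS : a ∈ S := nbrs_subset G S x (by simp [hnbrs])
  have hbS : b ∈ S := nbrs_subset G S x (by simp [hnbrs])
  obtain ⟨P, hP, hPb⟩ := hM.exists_head?_eq hbS
  obtain ⟨Q, hQ, hQb⟩ := hM.exists_getLast?_eq hbS
  obtain ⟨T, hT, haT, hTP, hTQ⟩ :=
    hM.exists_mem_of_two_le_card_nbrs (Multiset.Subset.refl _) haS ha P Q
  have hnodup := hM.nodup T hT
  have hxM : ∀ p ∈ M, x ∉ p := fun p hp hxp => hx (hM.subset hp hxp)
  have hxT := hxM T hT
  have hxP := hxM P hP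
  have hxQ := hxM Q hQ
  have hxb : b ≠ x := by rintro rfl; exact hx hbS
  have hMx := hM.insert_isolated hx
  rw [Coverable, arcsBetween_insert hx, hnbrs, Finset.sum_pair hab, ← add_assoc]
  obtain ⟨T₁, T₂, rfl⟩ := List.append_of_mem haT
  obtain hb | hb : b ∉ T₂ ∨ b ∉ T₁ := by grind
  · obtain ⟨P, rfl⟩ := List.head?_eq_some_iff.1 hPb
    obtain ⟨N, rfl⟩ := exists_eq_cons_cons hT hP hTP
    have hjoin := hMx.join_singleton hxT
    rw [cons_cons_cons_rotate, cons_cons_cons_rotate, Multiset.cons_swap] at hjoin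
    exact ⟨_, hjoin.cross_heads (by grind) hxP⟩
  · obtain ⟨Q, rfl⟩ := List.getLast?_eq_some_iff.1 hQb
    obtain ⟨N, rfl⟩ := exists_eq_cons_cons hT hQ hTQ
    have hjoin := hMx.join_singleton hxT
    rw [cons_cons_cons_rotate] at hjoin
    exact ⟨_, IsPathCover.cross_tails (l₁ := T₁ ++ [a]) (by simpa using hjoin) (by grind) hxQ⟩

theorem subdivide (h : Coverable (G ⊔ SimpleGraph.edge a b) S) (hx : x ∉ S) (hab : a ≠ b)
    (hG : ¬G.Adj a b) (hnbrs : nbrs G S x = {a, b}) : Coverable G (insert x S) := by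
  obtain ⟨M, hM⟩ := h
  have hxM : ∀ p ∈ M, x ∉ p := fun p hp hxp => hx (hM.subset hp hxp)
  rw [arcsBetween_sup_edge (nbrs_subset G S x (by simp [hnbrs]))
    (nbrs_subset G S x (by simp [hnbrs])) hab hG] at hM
  obtain ⟨l₁, l₂, l₃, l₄, N, rfl⟩ := hM.exists_eq_of_add_edgeArcs
  have hMx := hM.insert_isolated hx
  rw [cons_cons_cons_rotate] at hMx
  rw [Coverable, arcsBetween_insert hx, hnbrs, Finset.sum_pair hab, ← add_assoc]
  exact ⟨_, hMx.detour (hxM _ (by simp)) (hxM _ (by simp))⟩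

theorem subdivide_join (h : Coverable (G ⊔ SimpleGraph.edge a b) S) (hx : x ∉ S) (hab : a ≠ b)
    (hG : ¬G.Adj a b) (hca : c ≠ a) (hcb : c ≠ b) (hnbrs : nbrs G S x = {c, a, b})
    (hc : 2 ≤ (nbrs G S c).card) : Coverable G (insert x S) := by
  obtain ⟨M, hM⟩ := h
  have hxM : ∀ p ∈ M, x ∉ p := fun p hp hxp => hx (hM.subset hp hxp)
  rw [arcsBetween_sup_edge (nbrs_subset G S x (by simp [hnbrs]))
    (nbrs_subset G S x (by simp [hnbrs])) hab hG] at hM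
  obtain ⟨l₁, l₂, l₃, l₄, N, rfl⟩ := hM.exists_eq_of_add_edgeArcs
  obtain ⟨p, hp, hcp, hpA, hpB⟩ := hM.exists_mem_of_two_le_card_nbrs
    (Multiset.subset_of_le (Multiset.le_add_right _ _))
    (nbrs_subset G S x (by simp [hnbrs])) hc (l₁ ++ a :: b :: l₂) (l₃ ++ b :: a :: l₄)
  have hpN : p ∈ N := by simpa [hpA, hpB] using hp
  obtain ⟨N, rfl⟩ := Multiset.exists_cons_of_mem hpN
  obtain ⟨l₅, l₆, rfl⟩ := List.append_of_mem hcp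
  rw [cons_cons_cons_rotate, cons_cons_cons_rotate] at hM
  have hjoin := (hM.insert_isolated hx).join_singleton (hxM _ hp)
  rw [cons_cons_cons_rotate (l₅ ++ [c, x]), cons_cons_cons_rotate (x :: c :: l₆),
    add_right_comm] at hjoin
  rw [Coverable, arcsBetween_insert hx, hnbrs, Finset.sum_insert (by simp [hca, hcb]),
    Finset.sum_pair hab, ← add_assoc, ← add_assoc]
  exact ⟨_, hjoin.detour (hxM _ (by simp)) (hxM _ (by simp))⟩

theorem union (hS : Coverable G S) (hT : Coverable G T) (hd : Disjoint S T)
    (hmatch : (arcsBetween G S T : Set (V × V)).Pairwise fun e f => e.1 ≠ f.1 ∧ e.2 ≠ f.2) :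
    Coverable G (S ∪ T) := by
  obtain ⟨M₁, h₁⟩ := hS
  obtain ⟨M₂, h₂⟩ := hT
  rw [Finset.disjoint_left] at hd
  rw [Coverable, arcsBetween_union (Finset.disjoint_left.2 hd)]
  refine (h₁.disjUnion h₂ (Finset.disjoint_left.2 hd)).exists_add_matching ?_ ?_ ?_
  · rintro ⟨u, v⟩ huv
    rw [mem_arcsBetween] at huv
    exact ⟨Finset.mem_union_left T huv.1, Finset.mem_union_right S huv.2.1⟩
  · rintro ⟨u, v⟩ huv ⟨u', v'⟩ huv' hne
    obtain ⟨hu, hv⟩ := hmatch huv huv' hne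
    simp only [Finset.mem_coe, mem_arcsBetween] at huv huv'
    grind
  · rintro ⟨u, v⟩ huv p hp
    rw [mem_arcsBetween] at huv
    obtain hp | hp := Multiset.mem_add.1 hp
    · have hpS := fun w => h₁.subset (v := w) hp
      grind [List.mem_of_getLast?]
    · have hpT := fun w => h₂.subset (v := w) hp
      grind [List.mem_of_getLast?]

theorem of_sdiff (hTS : T ⊆ S) (hT : Coverable G T) (hST : Coverable G (S \ T))
    (hclosed : ∀ u ∈ T, nbrs G S u ⊆ T) : Coverable G S := by
  have hempty : arcsBetween G T (S \ T) = ∅ := by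
    refine Finset.eq_empty_of_forall_notMem fun ⟨u, v⟩ huv => ?_
    rw [mem_arcsBetween, Finset.mem_sdiff] at huv
    exact huv.2.1.2 (hclosed u huv.1 (mem_nbrs.2 ⟨huv.2.1.1, huv.2.2⟩))
  have := hT.union hST Finset.disjoint_sdiff (by simp [hempty])
  rwa [Finset.union_sdiff_of_subset hTS] at this

theorem glue (h₁ : Coverable G S₁) (h₂ : Coverable G S₂) (hv : S₁ ∩ S₂ = {v})
    (hsep : ∀ a ∈ S₁, ∀ b ∈ S₂, G.Adj a b → a = v ∨ b = v) : Coverable G (S₁ ∪ S₂) := by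
  obtain ⟨M₁, h₁⟩ := h₁
  obtain ⟨M₂, h₂⟩ := h₂
  have hmem : ∀ x, x ∈ S₁ ∧ x ∈ S₂ ↔ x = v := fun x => by
    rw [← Finset.mem_inter, hv, Finset.mem_singleton]
  obtain ⟨hv₁, hv₂⟩ := (hmem v).2 rfl
  have harcs : (arcsBetween G (S₁ ∪ S₂) (S₁ ∪ S₂)).val =
      (arcsBetween G S₁ S₁).val + (arcsBetween G S₂ S₂).val := by
    rw [(Finset.nodup _).ext]
    · rintro ⟨a, b⟩
      simp only [Multiset.mem_add, Finset.mem_val, mem_arcsBetween, Finset.mem_union]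
      have := hsep b
      grind [G.adj_comm a b]
    · refine Multiset.nodup_add.2 ⟨Finset.nodup _, Finset.nodup _, Multiset.disjoint_left.2 ?_⟩
      rintro ⟨a, b⟩ ha hb
      simp only [Finset.mem_val, mem_arcsBetween] at ha hb
      exact ha.2.2.ne (((hmem a).1 ⟨ha.1, hb.1⟩).trans ((hmem b).1 ⟨ha.2.1, hb.2.1⟩).symm)
  obtain ⟨p, hp, hpv⟩ := h₁.exists_getLast?_eq hv₁
  obtain ⟨q, hq, hqv⟩ := h₂.exists_head?_eq hv₂
  obtain ⟨l₁, rfl⟩ := List.getLast?_eq_some_iff.1 hpv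
  obtain ⟨l₂, rfl⟩ := List.head?_eq_some_iff.1 hqv
  have hl₁ : ∀ x ∈ l₁, x ∈ S₁ := fun x hx => h₁.subset hp (by simp [hx])
  have hl₂ : ∀ x ∈ l₂, x ∈ S₂ := fun x hx => h₂.subset hq (by simp [hx])
  have hnodup₁ := h₁.nodup _ hp
  have hnodup₂ := h₂.nodup _ hq
  obtain ⟨N₁, rfl⟩ := Multiset.exists_cons_of_mem hp
  obtain ⟨N₂, rfl⟩ := Multiset.exists_cons_of_mem hq
  exact ⟨_, harcs ▸ h₁.glue h₂ hv (by grind)⟩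

end Coverable

end CoverableOps

theorem Coverable.hasOPPDC [Fintype V] {G : SimpleGraph V} (h : Coverable G Finset.univ) :
    HasOPPDC G := by
  obtain ⟨M, h⟩ := h
  choose P hP hhead using fun v => h.exists_head?_eq (Finset.mem_univ v)
  have hinj : ∀ v w, P v = P w → v = w := fun v w hvw =>
    Option.some_injective _ (by rw [← hhead v, ← hhead w, hvw])
  have hsurj : ∀ p ∈ M, ∃ v, P v = p := fun p hp => by
    obtain ⟨v, -, hpv⟩ := h.exists_head?_mem hp
    exact ⟨v, h.head?_injOn (hP v) hp ((hhead v).trans hpv.symm)⟩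
  refine ⟨P, fun v => ⟨fun hnil => by simpa [hnil] using hhead v, h.nodup _ (hP v),
    h.isChain (hP v), hhead v⟩, fun w => ?_, fun a b hab => ?_⟩
  · obtain ⟨p, hp, hpw⟩ := h.exists_getLast?_eq (Finset.mem_univ w)
    obtain ⟨v, rfl⟩ := hsurj p hp
    exact ⟨v, hpw, fun u hu => hinj _ _ (h.getLast?_injOn (hP u) hp (hu.trans hpw.symm))⟩
  · obtain ⟨p, hp, hpe⟩ := h.exists_mem_arcs (e := (a, b)) (by simp [hab])
    obtain ⟨v, rfl⟩ := hsurj p hp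
    exact ⟨v, hpe, fun u hu => hinj _ _ (h.eq_of_mem_arcs (Finset.nodup _) (hP u) hp hu hpe)⟩

section SmallCovers

variable [DecidableEq V] {G : SimpleGraph V} {a b c d p q r x y : V}

theorem isPathCover_complete_four (hab : G.Adj a b) (hac : G.Adj a c) (hax : G.Adj a x)
    (hbc : G.Adj b c) (hbx : G.Adj b x) (hcx : G.Adj c x) :
    IsPathCover {a, b, c, x} (arcsBetween G {a, b, c, x} {a, b, c, x}).val
      {[a, b, c, x], [b, x, a, c], [c, a, x, b], [x, c, b, a]} := by
  have := hab.ne; have := hac.ne; have := hax.ne; have := hbc.ne; have := hbx.ne; have := hcx.ne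
  refine ⟨?_, ?_, ?_, ?_⟩
  · simp only [Multiset.insert_eq_cons, Multiset.mem_cons, Multiset.mem_singleton]
    grind
  · simp [*]
  · simp [← Multiset.singleton_add, *]
    abel
  · simp [arcsBetween_insert, nbrs_insert, nbrs_singleton, edgeArcs,
      ← Multiset.singleton_add, *]
    abel

theorem coverable_cycle_four (hxa : G.Adj x a) (hay : G.Adj a y) (hyb : G.Adj y b)
    (hxb : G.Adj x b) (hxy : ¬G.Adj x y) (hab : ¬G.Adj a b) (hxy' : x ≠ y) (hab' : a ≠ b) :
    Coverable G {x, a, y, b} := by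
  have := hxa.ne; have := hay.ne; have := hyb.ne; have := hxb.ne
  refine ⟨{[x, a], [a, y, b, x], [y, a, x, b], [b, y]}, ?_, ?_, ?_, ?_⟩
  · simp only [Multiset.insert_eq_cons, Multiset.mem_cons, Multiset.mem_singleton]
    grind
  · simp [*]
  · simp [← Multiset.singleton_add, *]
    abel
  · simp [arcsBetween_insert, nbrs_insert, nbrs_singleton, edgeArcs,
      ← Multiset.singleton_add, *]
    abel

theorem coverable_diamond (hqp : G.Adj q p) (hqr : G.Adj q r) (hpr : G.Adj p r) (hpy : G.Adj p y)
    (hry : G.Adj r y) (hqy : ¬G.Adj q y) (hqy' : q ≠ y) : Coverable G {q, p, r, y} := by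
  have := hqp.ne; have := hqr.ne; have := hpr.ne; have := hpy.ne; have := hry.ne
  refine ⟨{[q, p, r, y], [p, y, r, q], [r, p], [y, p, q, r]}, ?_, ?_, ?_, ?_⟩
  · simp only [Multiset.insert_eq_cons, Multiset.mem_cons, Multiset.mem_singleton]
    grind
  · simp [*]
  · simp [← Multiset.singleton_add, *]
    abel
  · simp [arcsBetween_insert, nbrs_insert, nbrs_singleton, edgeArcs,
      ← Multiset.singleton_add, *]
    abel

theorem coverable_complete_five_sub_edge (hxa : G.Adj x a) (hxb : G.Adj x b) (hxc : G.Adj x c)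
    (hab : G.Adj a b) (hac : G.Adj a c) (hbc : G.Adj b c) (had : G.Adj a d) (hbd : G.Adj b d)
    (hcd : G.Adj c d) (hxd : ¬G.Adj x d) (hxd' : x ≠ d) : Coverable G {x, a, b, c, d} := by
  have := hxa.ne; have := hxb.ne; have := hxc.ne; have := hab.ne; have := hac.ne; have := hbc.ne
  have := had.ne; have := hbd.ne; have := hcd.ne
  refine ⟨{[x, a, b, c], [a, c, b, d], [b, a, d, c, x], [c, d, a, x, b], [d, b, x, c, a]},
    ?_, ?_, ?_, ?_⟩
  · simp only [Multiset.insert_eq_cons, Multiset.mem_cons, Multiset.mem_singleton]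
    grind
  · simp [*]
  · simp [← Multiset.singleton_add, *]
    abel
  · simp [arcsBetween_insert, nbrs_insert, nbrs_singleton, edgeArcs,
      ← Multiset.singleton_add, *]
    abel

end SmallCovers

/-- `t` is the vertex set of a component of the subgraph induced by `S`, and this component is a
triangle. -/
structure IsTriangleComponent [DecidableEq V] (G : SimpleGraph V) (S t : Finset V) : Prop where
  subset : t ⊆ S
  card_eq : t.card = 3
  nbrs_eq : ∀ v ∈ t, nbrs G S v = t.erase v

/-- The subgraph induced by `S` has maximum degree at most four, has no nonempty subgraph of
minimum degree at least four, and has no component that is a triangle. The induction establishing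
path covers runs over these graphs. -/
structure Admissible [DecidableEq V] (G : SimpleGraph V) (S : Finset V) : Prop where
  card_nbrs_le : ∀ v ∈ S, (nbrs G S v).card ≤ 4
  exists_card_nbrs_le : ∀ T ⊆ S, T.Nonempty → ∃ v ∈ T, (nbrs G T v).card ≤ 3
  not_isTriangleComponent : ∀ t, ¬IsTriangleComponent G S t

/-- In the subgraph induced by `S`, no vertex of degree two lies in a triangle. -/
def NoTriangleTip (G : SimpleGraph V) (S : Finset V) : Prop :=
  ∀ q ∈ S, (nbrs G S q).card = 2 → ¬G.IsClique (nbrs G S q)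

/-- The induction hypothesis at `S`: smaller admissible sets are coverable, in every graph on the
same vertices. -/
def SmallerCoverable [DecidableEq V] (S : Finset V) : Prop :=
  ∀ (G : SimpleGraph V) (T : Finset V), T.card < S.card → Admissible G T → Coverable G T

section Admissible

variable [DecidableEq V] {G : SimpleGraph V} {S T t : Finset V} {c p q r u v w x : V}

theorem exists_eq_triple_of_card_eq_three (ht : t.card = 3) (hp : p ∈ t) (hr : r ∈ t)
    (hpr : p ≠ r) : ∃ y, p ≠ y ∧ r ≠ y ∧ t = {p, r, y} := by
  have hrp : r ∈ t.erase p := Finset.mem_erase.2 ⟨hpr.symm, hr⟩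
  obtain ⟨y, hy⟩ := Finset.card_eq_one.1
    (show ((t.erase p).erase r).card = 1 by
      rw [Finset.card_erase_of_mem hrp, Finset.card_erase_of_mem hp, ht])
  have hy' := Finset.mem_singleton_self y
  rw [← hy, Finset.mem_erase, Finset.mem_erase] at hy'
  exact ⟨y, hy'.2.1.symm, hy'.1.symm,
    by rw [← hy, Finset.insert_erase hrp, Finset.insert_erase hp]⟩

theorem nbrs_erase_self (G : SimpleGraph V) (S : Finset V) (x : V) :
    nbrs G (S.erase x) x = nbrs G S x := by
  ext y
  simp only [mem_nbrs, Finset.mem_erase]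
  exact ⟨fun h => ⟨h.1.2, h.2⟩, fun h => ⟨⟨h.2.ne', h.1⟩, h.2⟩⟩

theorem nbrs_erase (G : SimpleGraph V) (S : Finset V) (x v : V) :
    nbrs G (S.erase x) v = (nbrs G S v).erase x := by
  ext y
  simp only [mem_nbrs, Finset.mem_erase, and_assoc]

theorem card_nbrs_erase_add_one (hx : x ∈ S) (hvx : G.Adj v x) :
    (nbrs G (S.erase x) v).card + 1 = (nbrs G S v).card := by
  rw [nbrs_erase, Finset.card_erase_add_one (mem_nbrs.2 ⟨hx, hvx⟩)]

namespace IsTriangleComponent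

theorem adj (h : IsTriangleComponent G S t) (hu : u ∈ t) (hv : v ∈ t) (huv : u ≠ v) :
    G.Adj u v := by
  have : v ∈ nbrs G S u := by
    rw [h.nbrs_eq u hu]
    exact Finset.mem_erase.2 ⟨huv.symm, hv⟩
  exact (mem_nbrs.1 this).2

theorem mem_of_adj (h : IsTriangleComponent G S t) (hu : u ∈ t) (hw : w ∈ S) (huw : G.Adj u w) :
    w ∈ t :=
  Finset.mem_of_mem_erase (h.nbrs_eq u hu ▸ mem_nbrs.2 ⟨hw, huw⟩)

theorem of_subset (h : IsTriangleComponent G T t) (hTS : T ⊆ S)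
    (hcl : ∀ v ∈ t, nbrs G S v ⊆ T) : IsTriangleComponent G S t where
  subset := h.subset.trans hTS
  card_eq := h.card_eq
  nbrs_eq v hv := by
    rw [← h.nbrs_eq v hv]
    exact Finset.Subset.antisymm
      (fun w hw => mem_nbrs.2 ⟨hcl v hv hw, (mem_nbrs.1 hw).2⟩) (nbrs_mono hTS v)

theorem isClique (h : IsTriangleComponent G S t) : G.IsClique t :=
  fun _ hu _ hv => h.adj hu hv

theorem exists_adj_notMem (htip : NoTriangleTip G S) (hTS : T ⊆ S)
    (h : IsTriangleComponent G T t) (hu : u ∈ t) : ∃ y ∈ S, y ∉ T ∧ G.Adj u y := by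
  by_contra! hcl
  have hnbrs : nbrs G S u = t.erase u := by
    rw [← h.nbrs_eq u hu]
    refine Finset.Subset.antisymm (fun w hw => ?_) (nbrs_mono hTS u)
    rw [mem_nbrs] at hw ⊢
    exact ⟨by_contra fun hwT => hcl w hw.1 hwT hw.2, hw.2⟩
  refine htip u (hTS (h.subset hu)) ?_ ?_
  · rw [hnbrs, Finset.card_erase_of_mem hu, h.card_eq]
  · rw [hnbrs]
    exact h.isClique.subset (Finset.coe_subset.2 (t.erase_subset u))

theorem subset_nbrs_of_erase (htip : NoTriangleTip G S)
    (h : IsTriangleComponent G (S.erase x) t) : t ⊆ nbrs G S x := by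
  intro u hu
  obtain ⟨y, hyS, hyx, huy⟩ := h.exists_adj_notMem htip (S.erase_subset x) hu
  obtain rfl : y = x := by simpa [hyS] using hyx
  exact mem_nbrs.2 ⟨Finset.mem_of_mem_erase (h.subset hu), huy.symm⟩

end IsTriangleComponent

namespace Admissible

theorem of_subset (hS : Admissible G S) (hTS : T ⊆ S) (hT : ∀ t, ¬IsTriangleComponent G T t) :
    Admissible G T where
  card_nbrs_le v hv := (Finset.card_le_card (nbrs_mono hTS v)).trans (hS.card_nbrs_le v (hTS hv))
  exists_card_nbrs_le U hU := hS.exists_card_nbrs_le U (hU.trans hTS)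
  not_isTriangleComponent := hT

theorem of_boundary_subsingleton (hS : Admissible G S) (htip : NoTriangleTip G S) (hTS : T ⊆ S)
    (hbd : ∀ u ∈ T, ∀ y ∈ S, y ∉ T → G.Adj u y → u = c) : Admissible G T := by
  refine hS.of_subset hTS fun t ht => ?_
  have heq : ∀ u ∈ t, u = c := fun u hu => by
    obtain ⟨y, hy, hyT, huy⟩ := ht.exists_adj_notMem htip hTS hu
    exact hbd u (ht.subset hu) y hy hyT huy
  have := Finset.card_le_one.2 fun u hu v hv => (heq u hu).trans (heq v hv).symm
  have := ht.card_eq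
  lia

theorem erase_of_card_nbrs_le_two (hS : Admissible G S) (htip : NoTriangleTip G S)
    (hx : (nbrs G S x).card ≤ 2) : Admissible G (S.erase x) := by
  refine hS.of_subset (S.erase_subset x) fun t ht => ?_
  have := Finset.card_le_card (ht.subset_nbrs_of_erase htip)
  have := ht.card_eq
  lia

theorem two_le_card_nbrs_of_triangle_tip (hS : Admissible G S) (hq : q ∈ S)
    (hnbrs : nbrs G S q = {p, r}) (hpr : G.Adj p r) :
    2 ≤ (nbrs G (S.erase q) p).card ∨ 2 ≤ (nbrs G (S.erase q) r).card := by
  obtain ⟨hp, hqp⟩ := mem_nbrs.1 (show p ∈ nbrs G S q by simp [hnbrs])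
  obtain ⟨hr, hqr⟩ := mem_nbrs.1 (show r ∈ nbrs G S q by simp [hnbrs])
  by_contra! hlt
  have hnbrs' : ∀ u ∈ S, ∀ v ∈ S, G.Adj q u → G.Adj q v → G.Adj u v →
      (nbrs G (S.erase q) u).card < 2 → nbrs G S u = {q, v} := by
    intro u _ v hv hqu hqv huv hu
    have hmem : v ∈ nbrs G (S.erase q) u :=
      mem_nbrs.2 ⟨Finset.mem_erase.2 ⟨hqv.ne', hv⟩, huv⟩
    rw [← Finset.insert_erase (mem_nbrs.2 ⟨hq, hqu.symm⟩), ← nbrs_erase]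
    congr 1
    exact Finset.Subset.antisymm
      (fun w hw => Finset.mem_singleton.2 (Finset.card_le_one.1 (by lia) w hw v hmem))
      (Finset.singleton_subset_iff.2 hmem)
  have hnp := hnbrs' p hp r hr hqp hqr hpr hlt.1
  have hnr := hnbrs' r hr p hp hqr hqp hpr.symm hlt.2
  refine hS.not_isTriangleComponent {q, p, r} ⟨by grind, ?_, ?_⟩
  · exact Finset.card_eq_three.2 ⟨q, p, r, hqp.ne, hqr.ne, hpr.ne, rfl⟩
  · grind [hqp.ne, hqr.ne, hpr.ne]

end Admissible

namespace SmallerCoverable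

theorem coverable_of_closed (ih : SmallerCoverable S) (hS : Admissible G S) (hTS : T ⊆ S)
    (hne : T.Nonempty) (hT : Coverable G T) (hcl : ∀ u ∈ T, nbrs G S u ⊆ T) : Coverable G S := by
  have hadm : Admissible G (S \ T) := by
    refine hS.of_subset Finset.sdiff_subset fun t ht => hS.not_isTriangleComponent t ?_
    refine ht.of_subset Finset.sdiff_subset fun v hv w hw => ?_
    have hvS := Finset.mem_sdiff.1 (ht.subset hv)
    rw [mem_nbrs] at hw
    exact Finset.mem_sdiff.2
      ⟨hw.1, fun hwT => hvS.2 (hcl w hwT (mem_nbrs.2 ⟨hvS.1, hw.2.symm⟩))⟩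
  exact hT.of_sdiff hTS (ih G _ (Finset.card_lt_card (Finset.sdiff_ssubset hTS hne)) hadm) hcl

theorem coverable_of_insert_closed (ih : SmallerCoverable S) (hS : Admissible G S) (hq : q ∈ S)
    (ht : t ⊆ S) (hqt : nbrs G S q ⊆ t) (hcl : ∀ u ∈ t, nbrs G (S.erase q) u ⊆ t)
    (hcov : Coverable G (insert q t)) : Coverable G S := by
  refine ih.coverable_of_closed hS (Finset.insert_subset hq ht) (Finset.insert_nonempty q t) hcov ?_
  intro u hu
  obtain rfl | hu := Finset.mem_insert.1 hu
  · exact hqt.trans (Finset.subset_insert u t)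
  · rw [Finset.subset_insert_iff, ← nbrs_erase]
    exact hcl u hu

theorem coverable_of_triangle_tip (ih : SmallerCoverable S) (hS : Admissible G S) (hq : q ∈ S)
    (hnbrs : nbrs G S q = {p, r}) (hpr : G.Adj p r) : Coverable G S := by
  have hqn : ∀ y, y ∈ S ∧ G.Adj q y ↔ y = p ∨ y = r := fun y => by
    rw [← mem_nbrs, hnbrs, Finset.mem_insert, Finset.mem_singleton]
  obtain ⟨hp, hqp⟩ := (hqn p).2 (.inl rfl)
  obtain ⟨hr, hqr⟩ := (hqn r).2 (.inr rfl)
  have hp' : p ∈ S.erase q := Finset.mem_erase.2 ⟨hqp.ne', hp⟩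
  have hr' : r ∈ S.erase q := Finset.mem_erase.2 ⟨hqr.ne', hr⟩
  by_cases htri : ∃ t, IsTriangleComponent G (S.erase q) t
  · obtain ⟨t, ht⟩ := htri
    have hprt : p ∈ t ∨ r ∈ t := by
      by_contra! hprt
      refine hS.not_isTriangleComponent t (ht.of_subset (S.erase_subset q) fun v hv w hw => ?_)
      have := (hqn v).1
      grind [mem_nbrs, G.adj_comm, ht.subset hv]
    have hpt : p ∈ t := hprt.elim id fun hrt => ht.mem_of_adj hrt hp' hpr.symm
    have hrt : r ∈ t := ht.mem_of_adj hpt hr' hpr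
    have htS := ht.subset.trans (S.erase_subset q)
    obtain ⟨y, hpy, hry, rfl⟩ := exists_eq_triple_of_card_eq_three ht.card_eq hpt hrt hpr.ne
    have hqy : q ≠ y := fun hqy => Finset.notMem_erase q S (ht.subset (by simp [hqy]))
    refine ih.coverable_of_insert_closed hS hq htS (by grind)
      (fun u hu => ht.nbrs_eq u hu ▸ Finset.erase_subset _ _)
      (coverable_diamond hqp hqr hpr (ht.adj hpt (by simp) hpy) (ht.adj hrt (by simp) hry) ?_ hqy)
    exact fun hadj => ((hqn y).1 ⟨htS (by simp), hadj⟩).elim hpy.symm hry.symm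
  · have hcov := ih G _ (Finset.card_erase_lt_of_mem hq)
      (hS.of_subset (S.erase_subset q) (not_exists.1 htri))
    have hnbrs' := (nbrs_erase_self G S q).trans hnbrs
    rw [← Finset.insert_erase hq]
    obtain hpdeg | hrdeg := hS.two_le_card_nbrs_of_triangle_tip hq hnbrs hpr
    · exact hcov.insert_pair (S.notMem_erase q) hpr.ne hnbrs' hpdeg
    · exact hcov.insert_pair (S.notMem_erase q) hpr.ne' (hnbrs'.trans (Finset.pair_comm p r)) hrdeg

end SmallerCoverable

end Admissible

section SupEdge

variable {G : SimpleGraph V} {S T : Finset V} {a b v x : V}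

theorem nbrs_sup_edge_of_ne (hab : a ≠ b) (hva : v ≠ a) (hvb : v ≠ b) :
    nbrs (G ⊔ SimpleGraph.edge a b) S v = nbrs G S v := by
  ext y
  simp [sup_edge_adj_iff hab, hva, hvb]

theorem nbrs_sup_edge_of_notMem (hab : a ≠ b) (hT : a ∈ T → b ∉ T) (hv : v ∈ T) :
    nbrs (G ⊔ SimpleGraph.edge a b) T v = nbrs G T v := by
  ext y
  simp only [mem_nbrs, sup_edge_adj_iff hab]
  grind

variable [DecidableEq V]

theorem nbrs_sup_edge_left (hab : a ≠ b) (hb : b ∈ S) :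
    nbrs (G ⊔ SimpleGraph.edge a b) S a = insert b (nbrs G S a) := by
  ext y
  simp only [mem_nbrs, sup_edge_adj_iff hab, Finset.mem_insert]
  grind

theorem nbrs_sup_edge_right (hab : a ≠ b) (ha : a ∈ S) :
    nbrs (G ⊔ SimpleGraph.edge a b) S b = insert a (nbrs G S b) := by
  rw [SimpleGraph.edge_comm, nbrs_sup_edge_left hab.symm ha]

theorem card_nbrs_sup_edge_erase_le (hab : a ≠ b) (hx : x ∈ S) (ha : a ∈ S) (hb : b ∈ S)
    (hxa : G.Adj x a) (hxb : G.Adj x b) (v : V) :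
    (nbrs (G ⊔ SimpleGraph.edge a b) (S.erase x) v).card ≤ (nbrs G S v).card := by
  obtain rfl | hva := eq_or_ne v a
  · rw [nbrs_sup_edge_left hab (Finset.mem_erase.2 ⟨hxb.ne', hb⟩),
      ← card_nbrs_erase_add_one hx hxa.symm]
    exact Finset.card_insert_le _ _
  obtain rfl | hvb := eq_or_ne v b
  · rw [nbrs_sup_edge_right hab (Finset.mem_erase.2 ⟨hxa.ne', ha⟩),
      ← card_nbrs_erase_add_one hx hxb.symm]
    exact Finset.card_insert_le _ _
  rw [nbrs_sup_edge_of_ne hab hva hvb]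
  exact Finset.card_le_card (nbrs_mono (S.erase_subset x) v)

theorem Admissible.sup_edge_erase (hS : Admissible G S) (hab : a ≠ b) (hx : x ∈ S) (ha : a ∈ S)
    (hb : b ∈ S) (hxa : G.Adj x a) (hxb : G.Adj x b)
    (hdeg : ∀ T ⊆ S.erase x, a ∈ T → b ∈ T →
      ∃ v ∈ T, (nbrs (G ⊔ SimpleGraph.edge a b) T v).card ≤ 3)
    (htri : ∀ t, ¬IsTriangleComponent G (S.erase x) t)
    (htri' : ∀ t, IsTriangleComponent (G ⊔ SimpleGraph.edge a b) (S.erase x) t → a ∈ t → b ∉ t) :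
    Admissible (G ⊔ SimpleGraph.edge a b) (S.erase x) where
  card_nbrs_le v hv := (card_nbrs_sup_edge_erase_le hab hx ha hb hxa hxb v).trans
    (hS.card_nbrs_le v (Finset.mem_of_mem_erase hv))
  exists_card_nbrs_le T hT hne := by
    by_cases hcase : a ∈ T → b ∉ T
    · obtain ⟨v, hv, hcard⟩ := hS.exists_card_nbrs_le T (hT.trans (S.erase_subset x)) hne
      exact ⟨v, hv, by rwa [nbrs_sup_edge_of_notMem hab hcase hv]⟩
    · push Not at hcase
      exact hdeg T hT hcase.1 hcase.2
  not_isTriangleComponent t ht := by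
    have hadj : (G ⊔ SimpleGraph.edge a b).Adj a b := (sup_edge_adj_iff hab).2 (by simp)
    have hbt : a ∈ t → b ∈ t := fun hat =>
      ht.mem_of_adj hat (Finset.mem_erase.2 ⟨hxb.ne', hb⟩) hadj
    have hat : b ∈ t → a ∈ t := fun hbt =>
      ht.mem_of_adj hbt (Finset.mem_erase.2 ⟨hxa.ne', ha⟩) hadj.symm
    refine htri t ⟨ht.subset, ht.card_eq, fun v hv => ?_⟩
    rw [← ht.nbrs_eq v hv, nbrs_sup_edge_of_ne hab]
    · rintro rfl
      exact htri' t ht hv (hbt hv)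
    · rintro rfl
      exact htri' t ht (hat hv) hv

end SupEdge

section SmallDegree

variable [DecidableEq V] {G : SimpleGraph V} {S T t U : Finset V} {a b c x : V}

namespace SmallerCoverable

theorem coverable_of_card_nbrs_le_one (ih : SmallerCoverable S) (hS : Admissible G S)
    (htip : NoTriangleTip G S) (hx : x ∈ S) (hdeg : (nbrs G S x).card ≤ 1) : Coverable G S := by
  have hcov := ih G _ (Finset.card_erase_lt_of_mem hx)
    (hS.erase_of_card_nbrs_le_two htip (by lia))
  rw [← Finset.insert_erase hx]
  exact hcov.insert_of_card_nbrs_le_one (S.notMem_erase x) (by rwa [nbrs_erase_self])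

theorem coverable_of_sup_edge_triangle (ih : SmallerCoverable S) (hS : Admissible G S)
    (hx : x ∈ S) (hab : a ≠ b) (hnbrs : nbrs G S x = {a, b}) (hG : ¬G.Adj a b)
    (ht : IsTriangleComponent (G ⊔ SimpleGraph.edge a b) (S.erase x) t) (hat : a ∈ t)
    (hbt : b ∈ t) : Coverable G S := by
  have hxn : ∀ y, y ∈ S ∧ G.Adj x y ↔ y = a ∨ y = b := fun y => by
    rw [← mem_nbrs, hnbrs, Finset.mem_insert, Finset.mem_singleton]
  have htS := ht.subset.trans (S.erase_subset x)
  obtain ⟨y, hay, hby, rfl⟩ := exists_eq_triple_of_card_eq_three ht.card_eq hat hbt hab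
  have hyt : y ∈ ({a, b, y} : Finset V) := by simp
  have hxy : x ≠ y := fun hxy => Finset.notMem_erase x S (ht.subset (hxy ▸ hyt))
  have hadj := (sup_edge_adj_iff hab).1 (ht.adj hat hyt hay)
  have hadj' := (sup_edge_adj_iff hab).1 (ht.adj hyt hbt hby.symm)
  refine ih.coverable_of_insert_closed hS hx (t := {a, y, b}) (by grind) (by grind) (fun u hu => ?_)
    (coverable_cycle_four ((hxn a).2 (.inl rfl)).2 (by grind) (by grind)
      ((hxn b).2 (.inr rfl)).2 ?_ hG hxy hab)
  · rw [Finset.pair_comm]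
    refine Finset.Subset.trans (fun v hv => ?_)
      ((ht.nbrs_eq u (by grind)).le.trans (Finset.erase_subset _ _))
    rw [mem_nbrs] at hv ⊢
    exact ⟨hv.1, (sup_edge_adj_iff hab).2 (.inl hv.2)⟩
  · exact fun hxy => ((hxn y).1 ⟨htS hyt, hxy⟩).elim hay.symm hby.symm

theorem coverable_of_card_nbrs_eq_two (ih : SmallerCoverable S) (hS : Admissible G S)
    (htip : NoTriangleTip G S) (hx : x ∈ S) (hdeg : (nbrs G S x).card = 2) : Coverable G S := by
  obtain ⟨a, b, hab, hnbrs⟩ := Finset.card_eq_two.1 hdeg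
  obtain ⟨ha, hxa⟩ := mem_nbrs.1 (show a ∈ nbrs G S x by simp [hnbrs])
  obtain ⟨hb, hxb⟩ := mem_nbrs.1 (show b ∈ nbrs G S x by simp [hnbrs])
  have hG : ¬G.Adj a b := fun h => htip x hx hdeg (by simp [hnbrs, h])
  have hadm := hS.erase_of_card_nbrs_le_two htip hdeg.le
  have hlt := Finset.card_erase_lt_of_mem hx
  have hcov := ih G _ hlt hadm
  have hnbrs' := (nbrs_erase_self G S x).trans hnbrs
  by_cases htri : ∃ t, IsTriangleComponent (G ⊔ SimpleGraph.edge a b) (S.erase x) t ∧ a ∈ t ∧ b ∈ t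
  · obtain ⟨t, ht, hat, hbt⟩ := htri
    exact ih.coverable_of_sup_edge_triangle hS hx hab hnbrs hG ht hat hbt
  push Not at htri
  rw [← Finset.insert_erase hx]
  by_cases hda : 2 ≤ (nbrs G (S.erase x) a).card
  · exact hcov.insert_pair (S.notMem_erase x) hab hnbrs' hda
  refine (ih _ _ hlt (hS.sup_edge_erase hab hx ha hb hxa hxb (fun T hT haT hbT => ⟨a, haT, ?_⟩)
    hadm.not_isTriangleComponent htri)).subdivide (S.notMem_erase x) hab hG hnbrs'
  rw [nbrs_sup_edge_left hab hbT]
  have := Finset.card_insert_le b (nbrs G T a)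
  have := Finset.card_le_card (nbrs_mono (G := G) hT a)
  lia

theorem coverable_of_bridge (ih : SmallerCoverable S) (hS : Admissible G S)
    (htip : NoTriangleTip G S) (hTS : T ⊆ S) (hx : x ∈ T) (hc : c ∈ S) (hcT : c ∉ T)
    (hcross : ∀ u ∈ T, ∀ v ∈ S, v ∉ T → G.Adj u v → u = x ∧ v = c) : Coverable G S := by
  have hlt : T.card < S.card :=
    Finset.card_lt_card ((Finset.ssubset_iff_of_subset hTS).2 ⟨c, hc, hcT⟩)
  have hlt' : (S \ T).card < S.card := Finset.card_lt_card (Finset.sdiff_ssubset hTS ⟨x, hx⟩)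
  have hadm : Admissible G T := hS.of_boundary_subsingleton htip hTS
    fun u hu y hy hyT huy => (hcross u hu y hy hyT huy).1
  have hadm' : Admissible G (S \ T) := hS.of_boundary_subsingleton htip Finset.sdiff_subset
    fun u hu y hy hyT huy => by
      rw [Finset.mem_sdiff] at hu hyT
      exact (hcross y (by grind) u hu.1 hu.2 huy.symm).2
  rw [← Finset.union_sdiff_of_subset hTS]
  refine (ih G _ hlt hadm).union (ih G _ hlt' hadm') Finset.disjoint_sdiff ?_
  rintro ⟨u, v⟩ huv ⟨u', v'⟩ huv' hne
  simp only [Finset.mem_coe, mem_arcsBetween, Finset.mem_sdiff] at huv huv'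
  have := hcross u huv.1 v huv.2.1.1 huv.2.1.2 huv.2.2
  have := hcross u' huv'.1 v' huv'.2.1.1 huv'.2.1.2 huv'.2.2
  grind

theorem coverable_of_sup_edge_dense (ih : SmallerCoverable S) (hS : Admissible G S)
    (htip : NoTriangleTip G S) (hx : x ∈ S) (hab : a ≠ b) (hca : c ≠ a) (hcb : c ≠ b)
    (hnbrs : nbrs G S x = {c, a, b}) (hU : U ⊆ S.erase x) (ha : a ∈ U) (hb : b ∈ U)
    (hcard : ∀ v ∈ U, 3 < (nbrs (G ⊔ SimpleGraph.edge a b) U v).card) : Coverable G S := by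
  have hxn : ∀ y, y ∈ S ∧ G.Adj x y ↔ y = c ∨ y = a ∨ y = b := fun y => by
    simp [← mem_nbrs, hnbrs]
  obtain ⟨hc, hxc⟩ := (hxn c).2 (.inl rfl)
  obtain ⟨haS, hxa⟩ := (hxn a).2 (.inr (.inl rfl))
  obtain ⟨hbS, hxb⟩ := (hxn b).2 (.inr (.inr rfl))
  have hUS := hU.trans (S.erase_subset x)
  have hclosed : ∀ v ∈ U, ∀ y ∈ S, y ≠ x → G.Adj v y → y ∈ U := fun v hv y hy hyx hvy => by
    have heq := Finset.eq_of_subset_of_card_le (nbrs_mono hU v)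
      (((card_nbrs_sup_edge_erase_le hab hx haS hbS hxa hxb v).trans
        (hS.card_nbrs_le v (hUS hv))).trans (hcard v hv))
    have hy' : y ∈ nbrs (G ⊔ SimpleGraph.edge a b) (S.erase x) v :=
      mem_nbrs.2 ⟨Finset.mem_erase.2 ⟨hyx, hy⟩, (sup_edge_adj_iff hab).2 (.inl hvy)⟩
    exact nbrs_subset _ U v (heq ▸ hy')
  have hcU : c ∉ U := fun hcU => by
    have hcn := hcard c hcU
    rw [nbrs_sup_edge_of_ne hab hca hcb] at hcn
    have := Finset.card_le_card (nbrs_mono (G := G) hU c)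
    have := card_nbrs_erase_add_one hx hxc.symm
    have := hS.card_nbrs_le c hc
    lia
  have hTS : insert x U ⊆ S := Finset.insert_subset hx hUS
  have hcross : ∀ u ∈ insert x U, ∀ v ∈ S, v ∉ insert x U → G.Adj u v → u = x ∧ v = c := by
    intro u hu v hv hvT huv
    have := hclosed u
    grind
  exact ih.coverable_of_bridge hS htip hTS (U.mem_insert_self x) hc (by simp [hcU, hxc.ne']) hcross

theorem coverable_of_card_nbrs_eq_three (ih : SmallerCoverable S) (hS : Admissible G S)
    (hmin : ∀ v ∈ S, 3 ≤ (nbrs G S v).card) (hx : x ∈ S) (hdeg : (nbrs G S x).card = 3)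
    (hclique : ¬G.IsClique (nbrs G S x)) : Coverable G S := by
  have htip : NoTriangleTip G S := fun v hv hcard => by
    have := hmin v hv
    lia
  obtain ⟨a, ha, b, hb, hab, hG⟩ : ∃ a ∈ nbrs G S x, ∃ b ∈ nbrs G S x, a ≠ b ∧ ¬G.Adj a b := by
    simpa only [SimpleGraph.IsClique, Set.Pairwise, not_forall, exists_prop,
      Finset.mem_coe] using hclique
  obtain ⟨c, hac, hbc, hnbrs⟩ := exists_eq_triple_of_card_eq_three hdeg ha hb hab
  have hnbrs : nbrs G S x = {c, a, b} := by grind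
  have hc : c ∈ nbrs G S x := by simp [hnbrs]
  rw [mem_nbrs] at ha hb hc
  have hcdeg : 2 ≤ (nbrs G (S.erase x) c).card := by
    have := card_nbrs_erase_add_one hx hc.2.symm
    have := hmin c hc.1
    lia
  by_cases hdense : ∀ T ⊆ S.erase x, a ∈ T → b ∈ T →
      ∃ v ∈ T, (nbrs (G ⊔ SimpleGraph.edge a b) T v).card ≤ 3
  · rw [← Finset.insert_erase hx]
    refine (ih _ _ (Finset.card_erase_lt_of_mem hx) (hS.sup_edge_erase hab hx ha.1 hb.1 ha.2 hb.2
      hdense (fun t ht => ?_) fun t ht hat hbt => ?_)).subdivide_join (S.notMem_erase x) hab hG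
      hac.symm hbc.symm ((nbrs_erase_self G S x).trans hnbrs) hcdeg
    · have heq := Finset.eq_of_subset_of_card_le (ht.subset_nbrs_of_erase htip)
        (hdeg.trans ht.card_eq.symm).le
      exact hG (ht.adj (heq ▸ mem_nbrs.2 ha) (heq ▸ mem_nbrs.2 hb) hab)
    · have hcard := congrArg Finset.card (ht.nbrs_eq a hat)
      rw [nbrs_sup_edge_left hab (ht.subset hbt), Finset.card_erase_of_mem hat, ht.card_eq,
        Finset.card_insert_of_notMem fun h => hG (mem_nbrs.1 h).2] at hcard
      have := card_nbrs_erase_add_one hx ha.2.symm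
      have := hmin a ha.1
      lia
  · push Not at hdense
    obtain ⟨U, hU, haU, hbU, hcard⟩ := hdense
    exact ih.coverable_of_sup_edge_dense hS htip hx hab hac.symm hbc.symm hnbrs hU haU hbU hcard

end SmallerCoverable

end SmallDegree

/-- The closed neighbourhood of `x` in `S`. -/
noncomputable def closedNbrs [DecidableEq V] (G : SimpleGraph V) (S : Finset V) (x : V) :
    Finset V :=
  insert x (nbrs G S x)

/-- In the subgraph induced by `S`, the vertex `x` has degree three and its neighbours are pairwise
adjacent, so that its closed neighbourhood spans a complete graph on four vertices. -/
structure IsSimplicialCubic (G : SimpleGraph V) (S : Finset V) (x : V) : Prop where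
  mem : x ∈ S
  card_nbrs : (nbrs G S x).card = 3
  isClique_nbrs : G.IsClique (nbrs G S x)

section SimplicialCubic

variable [DecidableEq V] {G : SimpleGraph V} {S C : Finset V} {a b c d u v x y z : V}

theorem mem_closedNbrs : y ∈ closedNbrs G S x ↔ y = x ∨ y ∈ S ∧ G.Adj x y := by
  rw [closedNbrs, Finset.mem_insert, mem_nbrs]

theorem not_adj_of_mem_sdiff_closedNbrs (hy : y ∈ S \ closedNbrs G S x) :
    ¬G.Adj x y := fun hxy => by
  rw [Finset.mem_sdiff, mem_closedNbrs] at hy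
  exact hy.2 (.inr ⟨hy.1, hxy⟩)

theorem Admissible.eq_of_mem_nbrs_sdiff (hS : Admissible G S) (hz : z ∈ S) (hC : C ⊆ nbrs G S z)
    (hcard : 3 ≤ C.card) (hu : u ∈ nbrs G S z \ C) (hv : v ∈ nbrs G S z \ C) : u = v := by
  have hle := hS.card_nbrs_le z hz
  rw [← Finset.card_sdiff_add_card_eq_card hC] at hle
  exact Finset.card_le_one.1 (by lia) u hu v hv

namespace IsSimplicialCubic

theorem card_closedNbrs (h : IsSimplicialCubic G S x) : (closedNbrs G S x).card = 4 := by
  rw [closedNbrs, Finset.card_insert_of_notMem (by simp), h.card_nbrs]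

theorem closedNbrs_subset (h : IsSimplicialCubic G S x) : closedNbrs G S x ⊆ S :=
  Finset.insert_subset h.mem (nbrs_subset G S x)

theorem isClique_closedNbrs (h : IsSimplicialCubic G S x) : G.IsClique (closedNbrs G S x) := by
  rw [closedNbrs, Finset.coe_insert]
  exact h.isClique_nbrs.insert fun y hy _ => (mem_nbrs.1 hy).2

theorem eq_of_adj (h : IsSimplicialCubic G S x) (hS : Admissible G S) (hz : z ∈ closedNbrs G S x)
    (hu : u ∈ S \ closedNbrs G S x) (hv : v ∈ S \ closedNbrs G S x) (hzu : G.Adj z u)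
    (hzv : G.Adj z v) : u = v := by
  rw [Finset.mem_sdiff] at hu hv
  have hC : (closedNbrs G S x).erase z ⊆ nbrs G S z := fun y hy => by
    rw [Finset.mem_erase] at hy
    exact mem_nbrs.2 ⟨h.closedNbrs_subset hy.2, h.isClique_closedNbrs hz hy.2 hy.1.symm⟩
  have hcard : 3 ≤ ((closedNbrs G S x).erase z).card := by
    rw [Finset.card_erase_of_mem hz, h.card_closedNbrs]
  refine hS.eq_of_mem_nbrs_sdiff (h.closedNbrs_subset hz) hC hcard ?_ ?_ <;> grind [mem_nbrs]

theorem admissible_sdiff (h : IsSimplicialCubic G S x) (hS : Admissible G S)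
    (htip : NoTriangleTip G S)
    (hcubic : ∀ y ∈ S, (nbrs G S y).card = 3 → G.IsClique (nbrs G S y)) :
    Admissible G (S \ closedNbrs G S x) := by
  refine hS.of_subset Finset.sdiff_subset fun t ht => ?_
  have hattach : ∀ p ∈ t, ∃ y ∈ nbrs G S x, G.Adj y p := fun p hp => by
    obtain ⟨y, hy, hyK, hpy⟩ := ht.exists_adj_notMem htip Finset.sdiff_subset hp
    have := not_adj_of_mem_sdiff_closedNbrs (ht.subset hp)
    grind [mem_nbrs, mem_closedNbrs, G.adj_comm]
  choose! f hf hfadj using hattach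
  have heq : ∀ z ∈ nbrs G S x, ∀ p ∈ t, ∀ q ∈ t, G.Adj z p → G.Adj z q → p = q :=
    fun z hz p hp q hq => h.eq_of_adj hS (Finset.mem_insert_of_mem hz) (ht.subset hp) (ht.subset hq)
  have hinj : Set.InjOn f t := fun p hp q hq hpq =>
    heq (f p) (hf p hp) p hp q hq (hfadj p hp) (hpq ▸ hfadj q hq)
  have himage : t.image f = nbrs G S x := Finset.eq_of_subset_of_card_le
    (Finset.image_subset_iff.2 hf)
    (by rw [Finset.card_image_of_injOn hinj, ht.card_eq, h.card_nbrs])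
  obtain ⟨p, hp, q, hq, hpq⟩ := Finset.one_lt_card.1 (show 1 < t.card by rw [ht.card_eq]; simp)
  have hnbrs : nbrs G S p = insert (f p) (t.erase p) := by
    refine Finset.Subset.antisymm (fun w hw => ?_) (Finset.insert_subset
      (mem_nbrs.2 ⟨nbrs_subset G S x (hf p hp), (hfadj p hp).symm⟩)
      (ht.nbrs_eq p hp ▸ nbrs_mono Finset.sdiff_subset p))
    have hxp := not_adj_of_mem_sdiff_closedNbrs (ht.subset hp)
    rw [← ht.nbrs_eq p hp]
    by_cases hwx : w ∈ nbrs G S x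
    · obtain ⟨r, hr, rfl⟩ := Finset.mem_image.1 (himage ▸ hwx)
      rw [heq _ hwx p hp r hr (mem_nbrs.1 hw).2.symm (hfadj r hr)]
      exact Finset.mem_insert_self _ _
    · grind [mem_nbrs, mem_closedNbrs, G.adj_comm]
  have hfpt : f p ∉ t := fun hmem =>
    (Finset.mem_sdiff.1 (ht.subset hmem)).2 (Finset.mem_insert_of_mem (hf p hp))
  have hclique := hcubic p (Finset.mem_sdiff.1 (ht.subset hp)).1 (by
    rw [hnbrs, Finset.card_insert_of_notMem (fun h => hfpt (Finset.mem_of_mem_erase h)),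
      Finset.card_erase_of_mem hp, ht.card_eq])
  have hfq : G.Adj (f p) q := hclique (by simp [hnbrs]) (by simp [hnbrs, hq, hpq.symm])
    fun h => hfpt (h ▸ hq)
  exact hpq (heq (f p) (hf p hp) p hp q hq (hfadj p hp) hfq)

theorem adj_of_nbrs_eq (h : IsSimplicialCubic G S x) (hnbrs : nbrs G S x = {a, b, c}) :
    (G.Adj x a ∧ G.Adj x b ∧ G.Adj x c) ∧ G.Adj a b ∧ G.Adj a c ∧ G.Adj b c := by
  have hcard := h.card_nbrs
  have hclique := h.isClique_nbrs
  have hadj : ∀ y ∈ nbrs G S x, G.Adj x y := fun y hy => (mem_nbrs.1 hy).2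
  rw [hnbrs] at hcard hclique hadj
  have hab : a ≠ b := by grind [Finset.card_le_two]
  have hac : a ≠ c := by grind [Finset.card_le_two]
  have hbc : b ≠ c := by grind [Finset.card_le_two]
  exact ⟨⟨hadj a (by simp), hadj b (by simp), hadj c (by simp)⟩, hclique (by simp) (by simp) hab,
    hclique (by simp) (by simp) hac, hclique (by simp) (by simp) hbc⟩

theorem isPathCover_closedNbrs (h : IsSimplicialCubic G S x) (hnbrs : nbrs G S x = {a, b, c}) :
    IsPathCover (closedNbrs G S x) (arcsBetween G (closedNbrs G S x) (closedNbrs G S x)).val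
      {[a, b, c, x], [b, x, a, c], [c, a, x, b], [x, c, b, a]} := by
  obtain ⟨⟨hxa, hxb, hxc⟩, hab, hac, hbc⟩ := h.adj_of_nbrs_eq hnbrs
  have hQ : closedNbrs G S x = {a, b, c, x} := by grind [closedNbrs]
  rw [hQ]
  exact isPathCover_complete_four hab hac hxa.symm hbc hxb.symm hxc.symm

theorem coverable_closedNbrs (h : IsSimplicialCubic G S x) : Coverable G (closedNbrs G S x) := by
  obtain ⟨a, b, c, -, -, -, hnbrs⟩ := Finset.card_eq_three.1 h.card_nbrs
  exact ⟨_, h.isPathCover_closedNbrs hnbrs⟩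

theorem coverable_of_matching (h : IsSimplicialCubic G S x) (hS : Admissible G S)
    (hK : Coverable G (S \ closedNbrs G S x))
    (hmatch : ∀ d ∈ S \ closedNbrs G S x, ∀ u ∈ nbrs G S x, ∀ v ∈ nbrs G S x, G.Adj u d →
      G.Adj v d → u = v) : Coverable G S := by
  rw [← Finset.union_sdiff_of_subset h.closedNbrs_subset]
  refine h.coverable_closedNbrs.union hK Finset.disjoint_sdiff ?_
  have hnbrs : ∀ u ∈ closedNbrs G S x, ∀ d ∈ S \ closedNbrs G S x, G.Adj u d →
      u ∈ nbrs G S x := fun u hu d hd hud =>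
    (Finset.mem_insert.1 hu).resolve_left fun hux => not_adj_of_mem_sdiff_closedNbrs hd (hux ▸ hud)
  rintro ⟨u, d⟩ hud ⟨v, e⟩ hve hne
  rw [Finset.mem_coe, mem_arcsBetween] at hud hve
  obtain ⟨hu, hd, hud⟩ := hud
  obtain ⟨hv, he, hve⟩ := hve
  refine ⟨?_, ?_⟩
  · rintro rfl
    exact hne (by rw [h.eq_of_adj hS hu hd he hud hve])
  · rintro rfl
    exact hne (by rw [hmatch d hd u (hnbrs u hu d hd hud) v (hnbrs v hv d hd hve) hud hve])

theorem isPathCover_union_cross {q : List V} {N : Multiset (List V)} (h : IsSimplicialCubic G S x)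
    (hnbrs : nbrs G S x = {a, b, c})
    (hK : IsPathCover (S \ closedNbrs G S x)
      (arcsBetween G (S \ closedNbrs G S x) (S \ closedNbrs G S x)).val ((d :: q) ::ₘ N)) :
    IsPathCover (closedNbrs G S x ∪ S \ closedNbrs G S x)
      ((arcsBetween G (closedNbrs G S x) (closedNbrs G S x)).val +
        (arcsBetween G (S \ closedNbrs G S x) (S \ closedNbrs G S x)).val + edgeArcs b d)
      ([d, b, x, a, c] ::ₘ (b :: d :: q) ::ₘ [a, b, c, x] ::ₘ [c, a, x, b] ::ₘ [x, c, b, a] ::ₘ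
        N) := by
  have hcov := (h.isPathCover_closedNbrs hnbrs).disjUnion hK Finset.disjoint_sdiff
  have hne : ∀ y ∈ d :: q, y ≠ a ∧ y ≠ b ∧ y ≠ c ∧ y ≠ x := fun y hy => by
    have := (Finset.mem_sdiff.1 (hK.subset (Multiset.mem_cons_self _ _) hy)).2
    grind [closedNbrs]
  rw [show ({[a, b, c, x], [b, x, a, c], [c, a, x, b], [x, c, b, a]} : Multiset (List V)) +
      (d :: q) ::ₘ N = [b, x, a, c] ::ₘ (d :: q) ::ₘ [a, b, c, x] ::ₘ [c, a, x, b] ::ₘ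
      [x, c, b, a] ::ₘ N by simp only [Multiset.insert_eq_cons, ← Multiset.singleton_add]; abel]
    at hcov
  exact hcov.cross_heads (by grind) (by grind)

theorem coverable_of_two_adj (h : IsSimplicialCubic G S x) (hS : Admissible G S)
    (hK : Coverable G (S \ closedNbrs G S x)) (hnbrs : nbrs G S x = {a, b, c})
    (hd : d ∈ S \ closedNbrs G S x) (had : G.Adj a d) (hbd : G.Adj b d) (hcd : ¬G.Adj c d) :
    Coverable G S := by
  obtain ⟨M, hM⟩ := hK
  have hMK : ∀ p ∈ M, ∀ y ∈ p, y ∈ S \ closedNbrs G S x := fun p hp y hy => hM.subset hp hy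
  obtain ⟨p, hp, hpd⟩ := hM.exists_head?_eq hd
  obtain ⟨q, rfl⟩ := List.head?_eq_some_iff.1 hpd
  obtain ⟨N, rfl⟩ := Multiset.exists_cons_of_mem hp
  have hQ : closedNbrs G S x = {a, b, c, x} := by grind [closedNbrs]
  have hmemQ : ∀ y ∈ S \ closedNbrs G S x, y ≠ a ∧ y ≠ b ∧ y ≠ c ∧ y ≠ x := by grind
  rw [← Finset.union_sdiff_of_subset h.closedNbrs_subset, Coverable,
    arcsBetween_union Finset.disjoint_sdiff, ← Finset.add_sum_erase _ _
      (mem_arcsBetween.2 ⟨by simp [hQ], hd, hbd⟩ : (b, d) ∈ arcsBetween _ _ _), ← add_assoc]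
  have hE : ∀ e ∈ (arcsBetween G (closedNbrs G S x) (S \ closedNbrs G S x)).erase (b, d),
      e.2 ∈ S \ closedNbrs G S x ∧ (e.1 = a ∧ e.2 = d ∨ e.1 = c ∧ e.2 ≠ d ∧ G.Adj c e.2) := by
    rintro ⟨u, w⟩ he
    rw [Finset.mem_erase, mem_arcsBetween] at he
    obtain ⟨hne, hu, hw, huw⟩ := he
    have := h.eq_of_adj hS hu hw hd huw
    have := not_adj_of_mem_sdiff_closedNbrs hw
    grind
  refine (h.isPathCover_union_cross hnbrs hM).exists_add_matching ?_ ?_ ?_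
  · intro e he
    have := hE e he
    grind
  · intro e he f hf hne
    have hcf := h.eq_of_adj hS (show c ∈ closedNbrs G S x by simp [hQ]) (hE e he).1 (hE f hf).1
    have := hE e he
    have := hE f hf
    grind [Prod.ext_iff]
  · intro e he r hr
    have := hE e he
    simp only [Multiset.mem_cons] at hr hMK
    grind

theorem coverable_of_three_adj (h : IsSimplicialCubic G S x) (hS : Admissible G S)
    (htip : NoTriangleTip G S) (ih : SmallerCoverable S) (hnbrs : nbrs G S x = {a, b, c})
    (hd : d ∈ S \ closedNbrs G S x) (had : G.Adj a d) (hbd : G.Adj b d) (hcd : G.Adj c d) :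
    Coverable G S := by
  obtain ⟨hdS, hdQ⟩ := Finset.mem_sdiff.1 hd
  have hTS : insert d (closedNbrs G S x) ⊆ S := Finset.insert_subset hdS h.closedNbrs_subset
  have hcross : ∀ u ∈ insert d (closedNbrs G S x), ∀ v ∈ S, v ∉ insert d (closedNbrs G S x) →
      G.Adj u v → u = d := by
    intro u hu v hv hvT huv
    rw [Finset.mem_insert, not_or] at hvT
    have hvK := Finset.mem_sdiff.2 ⟨hv, hvT.2⟩
    refine (Finset.mem_insert.1 hu).resolve_right fun huQ => ?_
    have := h.eq_of_adj hS huQ hvK hd huv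
    have := not_adj_of_mem_sdiff_closedNbrs hvK
    grind [closedNbrs]
  by_cases hexit : ∃ e ∈ S, e ∉ insert d (closedNbrs G S x) ∧ G.Adj d e
  · obtain ⟨e, he, heT, hde⟩ := hexit
    refine ih.coverable_of_bridge hS htip hTS (Finset.mem_insert_self _ _) he heT
      fun u hu v hv hvT huv => ?_
    obtain rfl := hcross u hu v hv hvT huv
    have hsub : nbrs G S x ⊆ nbrs G S u := by
      intro y hy
      have := nbrs_subset G S x hy
      grind [mem_nbrs, G.adj_comm]
    refine ⟨rfl, hS.eq_of_mem_nbrs_sdiff hdS hsub h.card_nbrs.ge ?_ ?_⟩ <;>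
      grind [closedNbrs, mem_nbrs]
  · refine ih.coverable_of_closed hS hTS (Finset.insert_nonempty _ _) ?_ fun u hu v hv => ?_
    · obtain ⟨⟨hxa, hxb, hxc⟩, hab, hac, hbc⟩ := h.adj_of_nbrs_eq hnbrs
      have hT : insert d (closedNbrs G S x) = {x, a, b, c, d} := by grind [closedNbrs]
      rw [hT]
      exact coverable_complete_five_sub_edge hxa hxb hxc hab hac hbc had hbd hcd
        (not_adj_of_mem_sdiff_closedNbrs hd) fun hxd => hdQ (hxd ▸ Finset.mem_insert_self _ _)
    · rw [mem_nbrs] at hv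
      by_contra hvT
      obtain rfl := hcross u hu v hv.1 hvT hv.2
      exact hexit ⟨v, hv.1, hvT, hv.2⟩

theorem coverable (h : IsSimplicialCubic G S x) (hS : Admissible G S) (htip : NoTriangleTip G S)
    (hcubic : ∀ y ∈ S, (nbrs G S y).card = 3 → G.IsClique (nbrs G S y))
    (ih : SmallerCoverable S) : Coverable G S := by
  have hlt : (S \ closedNbrs G S x).card < S.card := Finset.card_lt_card
    (Finset.sdiff_ssubset h.closedNbrs_subset ⟨x, Finset.mem_insert_self _ _⟩)
  have hK := ih G _ hlt (h.admissible_sdiff hS htip hcubic)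
  by_cases hshared : ∃ d ∈ S \ closedNbrs G S x, ∃ u ∈ nbrs G S x, ∃ v ∈ nbrs G S x,
      G.Adj u d ∧ G.Adj v d ∧ u ≠ v
  · obtain ⟨d, hd, u, hu, v, hv, hud, hvd, huv⟩ := hshared
    obtain ⟨w, -, -, hnbrs⟩ := exists_eq_triple_of_card_eq_three h.card_nbrs hu hv huv
    by_cases hwd : G.Adj w d
    · exact h.coverable_of_three_adj hS htip ih hnbrs hd hud hvd hwd
    · exact h.coverable_of_two_adj hS hK hnbrs hd hud hvd hwd
  · push Not at hshared
    exact h.coverable_of_matching hS hK hshared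

end IsSimplicialCubic

theorem Admissible.coverable (hS : Admissible G S) : Coverable G S := by
  induction hk : S.card using Nat.strong_induction_on generalizing G S with
  | _ k hind =>
    subst hk
    have ih : SmallerCoverable S := fun G T hT hTS => hind _ hT hTS rfl
    obtain rfl | hne := S.eq_empty_or_nonempty
    · exact Coverable.empty G
    by_cases htip : NoTriangleTip G S
    swap
    · simp only [NoTriangleTip, not_forall, not_not] at htip
      obtain ⟨q, hq, hcard, hclique⟩ := htip
      obtain ⟨p, r, hpr, hnbrs⟩ := Finset.card_eq_two.1 hcard
      exact ih.coverable_of_triangle_tip hS hq hnbrs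
        (hclique (by simp [hnbrs]) (by simp [hnbrs]) hpr)
    by_cases hmin : ∀ v ∈ S, 3 ≤ (nbrs G S v).card
    swap
    · push Not at hmin
      obtain ⟨x, hx, hlt⟩ := hmin
      obtain hle | heq := Nat.le_or_eq_of_le_succ (Nat.le_of_lt_succ hlt)
      · exact ih.coverable_of_card_nbrs_le_one hS htip hx hle
      · exact ih.coverable_of_card_nbrs_eq_two hS htip hx heq
    by_cases hcubic : ∀ y ∈ S, (nbrs G S y).card = 3 → G.IsClique (nbrs G S y)
    · obtain ⟨x, hx, hle⟩ := hS.exists_card_nbrs_le S subset_rfl hne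
      have hdeg := hle.antisymm (hmin x hx)
      exact IsSimplicialCubic.coverable ⟨hx, hdeg, hcubic x hx hdeg⟩ hS htip hcubic ih
    · push Not at hcubic
      obtain ⟨x, hx, hdeg, hclique⟩ := hcubic
      exact ih.coverable_of_card_nbrs_eq_three hS hmin hx hdeg hclique

end SimplicialCubic

section Connected

variable {G : SimpleGraph V} {S T : Finset V} {u v : V} {k : ℕ}

theorem exists_separation [Finite V] (hvu : v ≠ u) (hcut : ¬(G.induce {w : V | w ≠ v}).Connected) :
    ∃ A : Finset V, v ∉ A ∧ A.Nonempty ∧ (∃ b, b ∉ A ∧ b ≠ v) ∧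
      ∀ a ∈ A, ∀ b, b ≠ v → G.Adj a b → b ∈ A := by
  classical
  have := Fintype.ofFinite V
  have hpre : ¬(G.induce {w : V | w ≠ v}).Preconnected := fun h =>
    hcut ((SimpleGraph.connected_iff _).2 ⟨h, ⟨⟨u, hvu.symm⟩⟩⟩)
  simp only [SimpleGraph.Preconnected, not_forall] at hpre
  obtain ⟨a, b, hab⟩ := hpre
  refine ⟨Finset.univ.filter fun x =>
    ∃ hx : x ≠ v, (G.induce {w : V | w ≠ v}).Reachable a ⟨x, hx⟩, ?_, ?_, ?_, ?_⟩
  · simp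
  · exact ⟨a, Finset.mem_filter.2 ⟨Finset.mem_univ _, a.2, .refl _⟩⟩
  · exact ⟨b, fun h => hab (Finset.mem_filter.1 h).2.2, b.2⟩
  · intro x hx y hy hxy
    obtain ⟨-, hxv, hax⟩ := Finset.mem_filter.1 hx
    exact Finset.mem_filter.2 ⟨Finset.mem_univ _, hy,
      hax.trans (SimpleGraph.Adj.reachable (by simpa using hxy))⟩

variable [Fintype V]

theorem eq_univ_of_forall_adj_mem (hconn : G.Connected) (hT : T.Nonempty)
    (hcl : ∀ u ∈ T, ∀ v, G.Adj u v → v ∈ T) : T = Finset.univ := by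
  obtain ⟨u, hu⟩ := hT
  refine Finset.eq_univ_iff_forall.2 fun v => ?_
  obtain ⟨p⟩ := hconn.preconnected u v
  induction p with
  | nil => exact hu
  | cons hadj _ ih => exact ih (hcl _ hu _ hadj)

variable [DecidableRel G.Adj]

theorem nbrs_subset_neighborFinset (T : Finset V) (u : V) : nbrs G T u ⊆ G.neighborFinset u :=
  fun w hw => (G.mem_neighborFinset u w).2 (mem_nbrs.1 hw).2

theorem card_nbrs_le_degree (T : Finset V) (u : V) : (nbrs G T u).card ≤ G.degree u :=
  Finset.card_le_card (nbrs_subset_neighborFinset T u)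

theorem exists_card_nbrs_lt (hconn : G.Connected) (hdeg : ∀ v, G.degree v ≤ k) (hT : T.Nonempty)
    (hne : G.IsRegularOfDegree k → T ≠ Finset.univ) : ∃ v ∈ T, (nbrs G T v).card < k := by
  by_contra! hcard
  have huniv : T = Finset.univ := eq_univ_of_forall_adj_mem hconn hT fun u hu w huw => by
    have heq := Finset.eq_of_subset_of_card_le (nbrs_subset_neighborFinset (G := G) T u)
      ((hdeg u).trans (hcard u hu))
    exact (mem_nbrs.1 (heq ▸ (G.mem_neighborFinset u w).2 huw)).1
  refine hne (fun u => (hdeg u).antisymm ?_) huniv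
  exact (hcard u (huniv ▸ Finset.mem_univ u)).trans (card_nbrs_le_degree T u)

theorem admissible_univ_of_cut_vertex [DecidableEq V] (hconn : G.Connected)
    (hdeg : ∀ v, G.degree v ≤ 4) (hreg : ¬G.IsRegularOfDegree 4)
    (hcut : ¬(G.induce {w : V | w ≠ v}).Connected) :
    Admissible G Finset.univ where
  card_nbrs_le u _ := (card_nbrs_le_degree _ u).trans (hdeg u)
  exists_card_nbrs_le T _ hT := by
    obtain ⟨u, hu, hlt⟩ := exists_card_nbrs_lt hconn hdeg hT fun h => absurd h hreg
    exact ⟨u, hu, Nat.le_of_lt_succ hlt⟩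
  not_isTriangleComponent t ht := by
    have hcard : 1 < t.card := by rw [ht.card_eq]; simp
    have huniv : t = Finset.univ := eq_univ_of_forall_adj_mem hconn
      (Finset.card_pos.1 (by lia)) fun u hu w huw => ht.mem_of_adj hu (Finset.mem_univ w) huw
    obtain ⟨u, -, huv⟩ := Finset.exists_mem_ne hcard v
    obtain ⟨A, -, ⟨a, ha⟩, ⟨b, hb, hbv⟩, hA⟩ := exists_separation huv.symm hcut
    exact hb (hA a ha b hbv (ht.adj (by simp [huniv]) (by simp [huniv]) fun h => hb (h ▸ ha)))

theorem admissible_of_isRegularOfDegree [DecidableEq V] (hconn : G.Connected)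
    (hreg : G.IsRegularOfDegree 4) (hS : S ≠ Finset.univ)
    (hcl : ∀ a ∈ S, a ≠ v → ∀ b, G.Adj a b → b ∈ S) : Admissible G S where
  card_nbrs_le u _ := (card_nbrs_le_degree S u).trans (hreg u).le
  exists_card_nbrs_le T hTS hT := by
    obtain ⟨u, hu, hlt⟩ := exists_card_nbrs_lt hconn (fun u => (hreg u).le) hT
      fun _ hTu => hS (Finset.univ_subset_iff.1 (hTu ▸ hTS))
    exact ⟨u, hu, Nat.le_of_lt_succ hlt⟩
  not_isTriangleComponent t ht := by
    obtain ⟨u, hu, huv⟩ := Finset.exists_mem_ne (show 1 < t.card by rw [ht.card_eq]; simp) v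
    have hsub : G.neighborFinset u ⊆ t.erase u := fun w hw => by
      rw [G.mem_neighborFinset] at hw
      exact Finset.mem_erase.2
        ⟨hw.ne', ht.mem_of_adj hu (hcl u (ht.subset hu) huv w hw) hw⟩
    have hle := Finset.card_le_card hsub
    rw [G.card_neighborFinset_eq_degree, hreg u, Finset.card_erase_of_mem hu, ht.card_eq] at hle
    lia

theorem coverable_univ_of_isRegularOfDegree (hconn : G.Connected) (hreg : G.IsRegularOfDegree 4)
    (hcut : ¬(G.induce {w : V | w ≠ v}).Connected) : Coverable G Finset.univ := by
  classical
  obtain ⟨u, hvu⟩ : ∃ u, G.Adj v u := (G.degree_pos_iff_exists_adj v).1 (by simp [hreg v])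
  obtain ⟨A, hvA, ⟨a, ha⟩, ⟨b, hb, hbv⟩, hA⟩ := exists_separation hvu.ne hcut
  have h₁ : Admissible G (insert v A) := by
    refine admissible_of_isRegularOfDegree (v := v) hconn hreg (fun h => ?_) ?_
    · exact (Finset.mem_insert.1 (h ▸ Finset.mem_univ b)).elim hbv hb
    · grind
  have h₂ : Admissible G Aᶜ := by
    refine admissible_of_isRegularOfDegree (v := v) hconn hreg (fun h => ?_) ?_
    · exact Finset.mem_compl.1 (h ▸ Finset.mem_univ a) ha
    · intro x hx hxv y hxy
      rw [Finset.mem_compl] at hx ⊢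
      exact fun hy => hx (hA y hy x hxv hxy.symm)
  have hunion : insert v A ∪ Aᶜ = Finset.univ := by
    rw [Finset.insert_union, Finset.union_compl, Finset.insert_eq_of_mem (Finset.mem_univ v)]
  have hinter : insert v A ∩ Aᶜ = {v} := by
    rw [Finset.insert_inter_of_mem (Finset.mem_compl.2 hvA), Finset.inter_compl,
      LawfulSingleton.insert_empty_eq]
  rw [← hunion]
  refine h₁.coverable.glue h₂.coverable hinter fun x hx y hy hxy => ?_
  rw [Finset.mem_insert] at hx
  rw [Finset.mem_compl] at hy
  exact hx.imp_right fun hxA => by_contra fun hyv => hy (hA x hxA y hyv hxy)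

end Connected

end PathCover

theorem four_regular_cut_vertex_hasOPPDC_general {V : Type*} [Fintype V]
    (G : SimpleGraph V) [DecidableRel G.Adj]
    (hconn : G.Connected)
    (hdeg : ∀ v : V, G.degree v ≤ 4)
    (hcut : ∃ v : V, ¬ (G.induce {w : V | w ≠ v}).Connected) :
    HasOPPDC G := by
  classical
  obtain ⟨v, hv⟩ := hcut
  by_cases hreg : G.IsRegularOfDegree 4
  · exact (PathCover.coverable_univ_of_isRegularOfDegree hconn hreg hv).hasOPPDC
  · exact (PathCover.admissible_univ_of_cut_vertex hconn hdeg hreg hv).coverable.hasOPPDC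

/-- every 4-regular graph with a cut vertex has an OPPDC. -/
theorem four_regular_cut_vertex_hasOPPDC {V : Type*} [Fintype V]
    (G : SimpleGraph V) [DecidableRel G.Adj]
    (hconn : G.Connected)
    (hreg : ∀ v : V, G.degree v = 4)
    (hcut : ∃ v : V, ¬ (G.induce {w : V | w ≠ v}).Connected) :
    HasOPPDC G :=
  four_regular_cut_vertex_hasOPPDC_general G hconn (fun v => (hreg v).le) hcut
end

section
/- For all positive integers n and m, the complete bipartite graph K_{n,m} has an oriented perfect path double cover. -/
/-!
Let `n ≤ m`, and label the two parts by `ZMod n` and `ZMod m`. The `m` zigzags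
`c, 0, c - 1, 1, c - 2, …, n - 1, c - n`, one for each `c : ZMod m`, use every arc exactly once.
Each of them repeats no vertex of `ZMod n`, and for `0 ≤ c < n` we cut the zigzag of `c` at the
vertex `c` of `ZMod n`. This gives `n + m` paths, one starting at each vertex. The pieces ending
in `ZMod n` end at `0, …, n - 1`, and the others end at the vertices `c - n`, so every vertex is an
end exactly once. A zigzag visits `n + 1` vertices of `ZMod m`, which are distinct unless `n = m`,
and in that case every zigzag is cut.
-/

theorem consecutivePairs_map {V W : Type*} (f : V → W) (l : List V) :
    (l.map f).consecutivePairs = l.consecutivePairs.map (Prod.map f f) := by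
  rw [List.consecutivePairs, ← List.map_tail, List.zip_map]

theorem mem_consecutivePairs_Ico {k l p q : ℕ} :
    (p, q) ∈ (List.Ico k l).consecutivePairs ↔ k ≤ p ∧ q = p + 1 ∧ q < l := by
  simp only [List.mem_iff_getElem, List.length_zip, List.length_tail, List.getElem_zip,
    List.getElem_tail, List.Ico, List.length_range', List.getElem_range', Prod.mk.injEq]
  constructor
  · rintro ⟨i, hi, rfl, rfl⟩
    omega
  · rintro ⟨hp, rfl, hq⟩
    exact ⟨p - k, by omega, by omega, by omega⟩

theorem natCast_eq_iff_eq_val {k n : ℕ} (hk : k < n) (i : ZMod n) :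
    (k : ZMod n) = i ↔ k = i.val := by
  have : NeZero n := ⟨by omega⟩
  exact ⟨fun h => by rw [← h, ZMod.val_cast_of_lt hk], fun h => by rw [h, ZMod.natCast_zmod_val]⟩

theorem cast_cast_of_val_lt {k l : ℕ} [NeZero k] {a : ZMod k} (ha : a.val < l) :
    ((a.cast : ZMod l).cast : ZMod k) = a := by
  have : NeZero l := ⟨by omega⟩
  rw [ZMod.cast_eq_val, ZMod.val_cast_eq_val_of_lt ha, ZMod.natCast_zmod_val]

theorem val_cast_of_le {n m : ℕ} [NeZero n] (hnm : n ≤ m) (i : ZMod n) :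
    (i.cast : ZMod m).val = i.val :=
  ZMod.val_cast_eq_val_of_lt (i.val_lt.trans_le hnm)

namespace HasOPPDC

theorem of_iso {V W : Type*} {G : SimpleGraph V} {H : SimpleGraph W} (e : G ≃g H)
    (hG : HasOPPDC G) : HasOPPDC H := by
  obtain ⟨P, hpath, hend, harc⟩ := hG
  refine ⟨fun w => (P (e.symm w)).map e, fun w => ?_, e.surjective.forall.2 fun v => ?_,
    e.surjective.forall₂.2 fun a b hab => ?_⟩
  · obtain ⟨hne, hnodup, hchain, hhead⟩ := hpath (e.symm w)
    exact ⟨by simpa using hne, hnodup.map e.injective,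
      (List.isChain_map e).2 (hchain.imp fun a b => e.map_adj_iff.2), by simp [hhead]⟩
  · refine (e.symm.toEquiv.existsUnique_congr fun w => ?_).2 (hend v)
    rw [List.getLast?_map, ← Option.map_some, (Option.map_injective e.injective).eq_iff]
    rfl
  · refine (e.symm.toEquiv.existsUnique_congr fun w => ?_).2 (harc a b (e.map_adj_iff.1 hab))
    change (e a, e b) ∈ ((P (e.symm w)).map e).consecutivePairs ↔ _
    rw [consecutivePairs_map, ← Prod.map_apply,
      List.mem_map_of_injective (e.injective.prodMap e.injective)]
    rfl

theorem of_segments {V : Type*} {G : SimpleGraph V} (u : V → ℕ → V) (first last : V → ℕ)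
    (hle : ∀ v, first v ≤ last v) (hstart : ∀ v, u v (first v) = v)
    (hinj : ∀ v, Set.InjOn (u v) (Set.Icc (first v) (last v)))
    (hadj : ∀ v p, first v ≤ p → p < last v → G.Adj (u v p) (u v (p + 1)))
    (hend : Function.Bijective fun v => u v (last v))
    (harc : ∀ a b, G.Adj a b →
      ∃! v, ∃ p, first v ≤ p ∧ p < last v ∧ u v p = a ∧ u v (p + 1) = b) :
    HasOPPDC G := by
  refine ⟨fun v => (List.Ico (first v) (last v + 1)).map (u v), fun v => ⟨?_, ?_, ?_, ?_⟩,
    fun w => ?_, fun a b hab => ?_⟩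
  · simpa using Nat.lt_succ_of_le (hle v)
  · refine (List.Ico.nodup _ _).map_on fun p hp q hq => hinj v ?_ ?_ <;> simp_all
  · refine (List.isChain_map _).2 ((List.Ico.isChain_succ _ _).imp_of_mem_imp ?_)
    rintro p _ hp hp' rfl
    rw [List.Ico.mem] at hp hp'
    exact hadj v p hp.1 (Nat.lt_of_succ_lt_succ hp'.2)
  · simp [List.Ico.eq_cons (Nat.lt_succ_of_le (hle v)), hstart]
  · simpa [List.Ico.succ_top (hle _)] using hend.existsUnique w
  · refine (existsUnique_congr fun v => ?_).1 (harc a b hab)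
    change _ ↔ (a, b) ∈ ((List.Ico (first v) (last v + 1)).map (u v)).consecutivePairs
    simp only [consecutivePairs_map, List.mem_map, Prod.exists, mem_consecutivePairs_Ico,
      Prod.map_apply, Prod.mk.injEq]
    constructor
    · rintro ⟨p, hfirst, hlast, ha, hb⟩
      exact ⟨p, p + 1, ⟨hfirst, rfl, Nat.succ_lt_succ hlast⟩, ha, hb⟩
    · rintro ⟨p, _, ⟨hfirst, rfl, hlast⟩, ha, hb⟩
      exact ⟨p, hfirst, Nat.lt_of_succ_lt_succ hlast, ha, hb⟩

end HasOPPDC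

namespace BipartiteZigzag

variable {n m : ℕ}

/-- The vertex at position `p` of the zigzag `c, 0, c - 1, 1, c - 2, …`, whose even positions lie
in `ZMod m` and whose odd positions lie in `ZMod n`. -/
def vertex (n : ℕ) {m : ℕ} (c : ZMod m) (p : ℕ) : ZMod n ⊕ ZMod m :=
  if Even p then .inr (c - (p / 2 : ℕ)) else .inl (p / 2 : ℕ)

/-- The first vertex of the zigzag that contains the path starting at a given vertex. -/
def zigzag : ZMod n ⊕ ZMod m → ZMod m
  | .inl i => i.cast
  | .inr c => c

/-- The position on its zigzag at which the path from a given vertex starts. -/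
def startPos : ZMod n ⊕ ZMod m → ℕ
  | .inl i => 2 * i.val + 1
  | .inr _ => 0

/-- The position on its zigzag at which the path from a given vertex ends: the position of the cut,
if the path starts in `ZMod m` on a zigzag that is cut, and `2 * n` otherwise. -/
def endPos : ZMod n ⊕ ZMod m → ℕ
  | .inl _ => 2 * n
  | .inr c => if c.val < n then 2 * c.val + 1 else 2 * n

theorem vertex_two_mul (c : ZMod m) (k : ℕ) : vertex n c (2 * k) = .inr (c - k) := by
  simp [vertex]

theorem vertex_two_mul_add_one (c : ZMod m) (k : ℕ) : vertex n c (2 * k + 1) = .inl k := by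
  simp [vertex, Nat.mul_add_div]

theorem vertex_two_mul_add_two (c : ZMod m) (k : ℕ) :
    vertex n c (2 * k + 1 + 1) = .inr (c - (k + 1)) := by
  rw [← Nat.cast_succ]
  exact vertex_two_mul c (k + 1)

theorem adj_vertex (c : ZMod m) (p : ℕ) :
    (completeBipartiteGraph (ZMod n) (ZMod m)).Adj (vertex n c p) (vertex n c (p + 1)) := by
  obtain ⟨k, rfl | rfl⟩ := p.even_or_odd'
  · simp [vertex_two_mul, vertex_two_mul_add_one]
  · simp [vertex_two_mul_add_one, vertex_two_mul_add_two]

theorem injOn_vertex (c : ZMod m) {k l : ℕ} (hn : l ≤ 2 * n) (hm : l < k + 2 * m) :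
    Set.InjOn (vertex n c) (Set.Icc k l) := by
  rintro p ⟨hkp, hpl⟩ q ⟨hkq, hql⟩ hpq
  obtain ⟨i, rfl | rfl⟩ := p.even_or_odd' <;> obtain ⟨j, rfl | rfl⟩ := q.even_or_odd' <;>
    simp only [vertex_two_mul, vertex_two_mul_add_one, Sum.inl.injEq, Sum.inr.injEq, reduceCtorEq,
      sub_right_inj, ZMod.natCast_eq_natCast_iff] at hpq
  · rw [hpq.eq_of_abs_lt (by rw [abs_lt]; omega)]
  · rw [hpq.eq_of_lt_of_lt (by omega) (by omega)]

theorem endPos_le (v : ZMod n ⊕ ZMod m) : endPos v ≤ 2 * n := by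
  rcases v with i | c <;> simp only [endPos]
  · rfl
  · split_ifs <;> omega

theorem injOn_vertex_zigzag [NeZero m] (hnm : n ≤ m) (v : ZMod n ⊕ ZMod m) :
    Set.InjOn (vertex n (zigzag v)) (Set.Icc (startPos v) (endPos v)) := by
  refine injOn_vertex _ (endPos_le v) ?_
  rcases v with i | c <;> simp only [startPos, endPos]
  · omega
  · have := c.val_lt
    split_ifs <;> omega

variable [NeZero n]

theorem startPos_le_endPos (v : ZMod n ⊕ ZMod m) : startPos v ≤ endPos v := by
  rcases v with i | c <;> simp only [startPos, endPos]
  · have := i.val_lt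
    omega
  · omega

theorem vertex_zigzag_startPos (v : ZMod n ⊕ ZMod m) : vertex n (zigzag v) (startPos v) = v := by
  rcases v with i | c
  · simp [startPos, vertex_two_mul_add_one]
  · simp [startPos, zigzag, vertex]

theorem existsUnique_step_inl_inr (i : ZMod n) (d : ZMod m) :
    ∃! x : ZMod m × ℕ,
      x.2 < 2 * n ∧ vertex n x.1 x.2 = .inl i ∧ vertex n x.1 (x.2 + 1) = .inr d := by
  have hi := i.val_lt
  refine ⟨(d + (i.val + 1), 2 * i.val + 1), ⟨by dsimp only; omega, ?_, ?_⟩, ?_⟩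
  · simp [vertex_two_mul_add_one]
  · simp [vertex_two_mul_add_two]
  · rintro ⟨c, p⟩ ⟨hp : p < 2 * n, hi, hd⟩
    obtain ⟨k, rfl | rfl⟩ := p.even_or_odd'
    · simp [vertex_two_mul] at hi
    · simp only [vertex_two_mul_add_one, vertex_two_mul_add_two, Sum.inl.injEq, Sum.inr.injEq,
        natCast_eq_iff_eq_val (by omega : k < n)] at hi hd
      subst hi hd
      simp

theorem existsUnique_step_inr_inl (d : ZMod m) (i : ZMod n) :
    ∃! x : ZMod m × ℕ,
      x.2 < 2 * n ∧ vertex n x.1 x.2 = .inr d ∧ vertex n x.1 (x.2 + 1) = .inl i := by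
  have hi := i.val_lt
  refine ⟨(d + i.val, 2 * i.val), ⟨by dsimp only; omega, ?_, ?_⟩, ?_⟩
  · simp [vertex_two_mul]
  · simp [vertex_two_mul_add_one]
  · rintro ⟨c, p⟩ ⟨hp : p < 2 * n, hd, hi⟩
    obtain ⟨k, rfl | rfl⟩ := p.even_or_odd'
    · simp only [vertex_two_mul, vertex_two_mul_add_one, Sum.inl.injEq, Sum.inr.injEq,
        natCast_eq_iff_eq_val (by omega : k < n)] at hi hd
      subst hi hd
      simp
    · simp [vertex_two_mul_add_one] at hd

theorem existsUnique_step {a b : ZMod n ⊕ ZMod m}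
    (hab : (completeBipartiteGraph (ZMod n) (ZMod m)).Adj a b) :
    ∃! x : ZMod m × ℕ, x.2 < 2 * n ∧ vertex n x.1 x.2 = a ∧ vertex n x.1 (x.2 + 1) = b := by
  rcases a with i | c <;> rcases b with j | d
  · simp at hab
  · exact existsUnique_step_inl_inr i d
  · exact existsUnique_step_inr_inl c j
  · simp at hab

variable [NeZero m]

theorem bijective_vertex_endPos (hnm : n ≤ m) :
    Function.Bijective fun v : ZMod n ⊕ ZMod m => vertex n (zigzag v) (endPos v) := by
  refine Function.Surjective.bijective_of_finite ?_
  rintro (i | d)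
  · refine ⟨.inr i.cast, ?_⟩
    simp [endPos, zigzag, val_cast_of_le hnm, i.val_lt, vertex_two_mul_add_one]
  · by_cases hcut : (d + n).val < n
    · refine ⟨.inl (d + n).cast, ?_⟩
      simp [endPos, zigzag, cast_cast_of_val_lt hcut, vertex_two_mul]
    · exact ⟨.inr (d + n), by simp [endPos, zigzag, hcut, vertex_two_mul]⟩

theorem existsUnique_path (hnm : n ≤ m) (c : ZMod m) {p : ℕ} (hp : p < 2 * n) :
    ∃! v : ZMod n ⊕ ZMod m, zigzag v = c ∧ startPos v ≤ p ∧ p < endPos v := by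
  by_cases hcut : c.val < n ∧ 2 * c.val + 1 ≤ p
  · refine ⟨.inl c.cast, ⟨cast_cast_of_val_lt hcut.1, ?_, hp⟩, ?_⟩
    · simpa [startPos, ZMod.val_cast_eq_val_of_lt hcut.1] using hcut.2
    · rintro (i | d) ⟨rfl, -, hend⟩
      · rw [zigzag, ZMod.cast_cast_zmod_of_le hnm]
      · simp only [zigzag, endPos] at hcut hend
        rw [if_pos hcut.1] at hend
        omega
  · refine ⟨.inr c, ⟨rfl, Nat.zero_le _, ?_⟩, ?_⟩
    · simp only [endPos]
      split_ifs <;> omega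
    · rintro (i | d) ⟨rfl, hstart, -⟩
      · rw [zigzag, val_cast_of_le hnm] at hcut
        exact absurd ⟨i.val_lt, hstart⟩ hcut
      · rfl

theorem hasOPPDC (hnm : n ≤ m) : HasOPPDC (completeBipartiteGraph (ZMod n) (ZMod m)) := by
  refine .of_segments (fun v => vertex n (zigzag v)) startPos endPos startPos_le_endPos
    vertex_zigzag_startPos (injOn_vertex_zigzag hnm) (fun v p _ _ => adj_vertex _ p)
    (bijective_vertex_endPos hnm) fun a b hab => ?_
  obtain ⟨⟨c, p⟩, ⟨hp, ha, hb⟩, hstep⟩ := existsUnique_step hab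
  obtain ⟨v, ⟨rfl, hstart, hend⟩, hpath⟩ := existsUnique_path hnm c hp
  refine ⟨v, ⟨p, hstart, hend, ha, hb⟩, ?_⟩
  rintro w ⟨q, hstart', hend', ha', hb'⟩
  obtain ⟨hzigzag, rfl⟩ :=
    Prod.mk.inj (hstep (zigzag w, q) ⟨hend'.trans_le (endPos_le w), ha', hb'⟩)
  exact hpath w ⟨hzigzag, hstart', hend'⟩

end BipartiteZigzag

theorem completeBipartite_hasOPPDC_of_card_le {α β : Type*} [Finite α] [Finite β] [Nonempty α]
    [Nonempty β] (h : Nat.card α ≤ Nat.card β) : HasOPPDC (completeBipartiteGraph α β) := by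
  have : NeZero (Nat.card α) := ⟨Nat.card_pos.ne'⟩
  have : NeZero (Nat.card β) := ⟨Nat.card_pos.ne'⟩
  exact (BipartiteZigzag.hasOPPDC h).of_iso (SimpleGraph.completeBipartiteGraphCongr
    ((ZMod.finEquiv _).symm.toEquiv.trans (Finite.equivFin α).symm)
    ((ZMod.finEquiv _).symm.toEquiv.trans (Finite.equivFin β).symm))

theorem completeBipartite_hasOPPDC_general (α β : Type*) [Finite α] [Finite β] [Nonempty α]
    [Nonempty β] : HasOPPDC (completeBipartiteGraph α β) := by
  rcases le_total (Nat.card α) (Nat.card β) with h | h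
  · exact completeBipartite_hasOPPDC_of_card_le h
  · exact (completeBipartite_hasOPPDC_of_card_le h).of_iso ⟨.sumComm β α, by simp [or_comm]⟩

/-- every complete bipartite graph `K_{n,m}` (n, m ≥ 1) has an
OPPDC. -/
theorem completeBipartite_hasOPPDC (n m : ℕ) (hn : 1 ≤ n) (hm : 1 ≤ m) :
    HasOPPDC (completeBipartiteGraph (Fin n) (Fin m)) := by
  have : Nonempty (Fin n) := Fin.pos_iff_nonempty.1 hn
  have : Nonempty (Fin m) := Fin.pos_iff_nonempty.1 hm
  exact completeBipartite_hasOPPDC_general (Fin n) (Fin m)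
end
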